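/- arXiv:1603.08324 — 2 statements merged into one kernel-verified Lean document; each statement's English description precedes it below -/
import Mathlib

section
/- Let Ω be a convex body in ℝ^m (a compact convex set with nonempty interior), let α be a real number with α > −1/m, and let γ = α/(1 + mα) if α ≠ 0 and γ = 0 if α = 0. Let φ : ℝ^m → [0,∞) be continuous and strictly α-concave on ℝ^m. Then the function G_Ω(x) = ∫_Ω φ(x−y) dy is strictly γ-concave on ℝ^m. -/
open MeasureTheory

noncomputable section

/-- The `α`-power mean `((1-l) a^α + l b^α)^{1/α}` of nonnegative numbers `a, b` with
weight `l`, for `α ∈ ℝ ∪ {±∞}`, interpreted as `0` whenever `a b = 0`, as the geometric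
mean `a^{1-l} b^l` for `α = 0`, as `max` for `α = +∞` and as `min` for `α = −∞`. -/
def powMean (α : EReal) (l a b : ℝ) : ℝ :=
  if a = 0 ∨ b = 0 then 0
  else if α = ⊤ then max a b
  else if α = ⊥ then min a b
  else if α = 0 then a ^ (1 - l) * b ^ l
  else ((1 - l) * a ^ α.toReal + l * b ^ α.toReal) ^ α.toReal⁻¹

/-- A nonnegative function `φ` on a real vector space is strictly `α`-concave if
`φ((1-l)x + l y) > ((1-l)φ(x)^α + l φ(y)^α)^{1/α}` for all `x ≠ y` and `0 < l < 1`. -/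
def StrictAlphaConcave {V : Type*} [AddCommGroup V] [Module ℝ V]
    (α : EReal) (φ : V → ℝ) : Prop :=
  ∀ x y : V, x ≠ y → ∀ l : ℝ, 0 < l → l < 1 →
    powMean α l (φ x) (φ y) < φ ((1 - l) • x + l • y)

/-!
A nonnegative function on a nontrivial real vector space cannot be strictly concave, so `α ≤ 0`.
Then the Borell–Brascamp–Lieb inequality yields `γ`-concavity of `G_Ω`: in dimension one it follows
from `|A| + |B| ≤ |A + B|` applied to the superlevel sets of functions with equal suprema, together
with Hölder's inequality for the normalization, and Fubini's theorem propagates it, each coordinate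
turning the exponent `α` into `α / (1 + α)`.

For strictness, `G_Ω x` and `G_Ω y` are integrals of `φ` over the translates `x - Ω` and `y - Ω`.
For `x ≠ y` some ball `P` lies in the first and misses the second, so by compactness the concavity
inequality between points of `P` and of `y - Ω` holds with a uniform factor `κ > 1` to spare.
Multiplying `φ` by `κ` on `P` therefore preserves the hypothesis of the inequality and strictly
increases its left side.
-/

open scoped ENNReal NNReal Pointwise
open Module Set Filter Topology

/-! ### Power means of extended nonnegative numbers -/

/-- The `α`-power mean of `a, b : ℝ≥0∞` with weight `l`. For `α ≤ 0` and `0 < l < 1` the conventions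
`0 ^ α = ∞` (`α < 0`) and `0 * ∞ = 0` make it vanish as soon as `a` or `b` does, so it extends
`powMean`. -/
def ePowMean (α l : ℝ) (a b : ℝ≥0∞) : ℝ≥0∞ :=
  if α = 0 then a ^ (1 - l) * b ^ l
  else (ENNReal.ofReal (1 - l) * a ^ α + ENNReal.ofReal l * b ^ α) ^ α⁻¹

lemma strictAnti_ennreal_rpow_of_neg {z : ℝ} (hz : z < 0) : StrictAnti fun x : ℝ≥0∞ ↦ x ^ z := by
  intro x y hxy
  have h := ENNReal.strictMono_rpow_of_pos (neg_pos.2 hz) hxy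
  simpa only [ENNReal.rpow_neg, ENNReal.inv_lt_inv] using h

section ePowMean

variable {α l : ℝ} {a b c d t : ℝ≥0∞}

lemma ePowMean_self (hl : l ∈ Ioo (0 : ℝ) 1) : ePowMean α l a a = a := by
  have hl' : 0 ≤ 1 - l := sub_nonneg.2 hl.2.le
  unfold ePowMean
  split_ifs with hα
  · rw [← ENNReal.rpow_add_of_nonneg _ _ hl' hl.1.le, sub_add_cancel, ENNReal.rpow_one]
  · rw [← add_mul, ← ENNReal.ofReal_add hl' hl.1.le, sub_add_cancel, ENNReal.ofReal_one, one_mul,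
      ENNReal.rpow_rpow_inv hα]

lemma ePowMean_zero_left (hα : α ≤ 0) (hl : l ∈ Ioo (0 : ℝ) 1) : ePowMean α l 0 b = 0 := by
  have hl' : 0 < 1 - l := sub_pos.2 hl.2
  unfold ePowMean
  split_ifs with h
  · rw [ENNReal.zero_rpow_of_pos hl', zero_mul]
  · have hα' : α < 0 := lt_of_le_of_ne hα h
    rw [ENNReal.zero_rpow_of_neg hα', ENNReal.mul_top (ENNReal.ofReal_pos.2 hl').ne', top_add,
      ENNReal.top_rpow_of_neg (inv_lt_zero.2 hα')]

lemma ePowMean_swap : ePowMean α l a b = ePowMean α (1 - l) b a := by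
  simp only [ePowMean, sub_sub_cancel, mul_comm, add_comm]

lemma one_sub_mem_Ioo (hl : l ∈ Ioo (0 : ℝ) 1) : 1 - l ∈ Ioo (0 : ℝ) 1 :=
  ⟨sub_pos.2 hl.2, sub_lt_self _ hl.1⟩

lemma ePowMean_zero_right (hα : α ≤ 0) (hl : l ∈ Ioo (0 : ℝ) 1) : ePowMean α l a 0 = 0 := by
  rw [ePowMean_swap, ePowMean_zero_left hα (one_sub_mem_Ioo hl)]

lemma ePowMean_mul_mul (ht₀ : t ≠ 0) (ht : t ≠ ∞) :
    ePowMean α l (t * a) (t * b) = t * ePowMean α l a b := by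
  have mul_rpow (x : ℝ≥0∞) (z : ℝ) : (t * x) ^ z = t ^ z * x ^ z := by
    simp [ENNReal.mul_rpow_eq_ite, ht₀, ht]
  unfold ePowMean
  split_ifs with hα
  · rw [mul_rpow, mul_rpow, mul_mul_mul_comm, ← ENNReal.rpow_add _ _ ht₀ ht, sub_add_cancel,
      ENNReal.rpow_one]
  · have hu₀ : t ^ α ≠ 0 := (ENNReal.rpow_pos (pos_iff_ne_zero.2 ht₀) ht).ne'
    have hu : t ^ α ≠ ∞ := ENNReal.rpow_ne_top_of_ne_zero ht₀ ht
    rw [mul_rpow, mul_rpow, mul_left_comm, mul_left_comm (ENNReal.ofReal l), ← mul_add,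
      ENNReal.mul_rpow_eq_ite, if_neg (by simp [hu₀, hu]), ENNReal.rpow_rpow_inv hα]

lemma ePowMean_mono (hα : α ≤ 0) (hl : l ∈ Ioo (0 : ℝ) 1) (hac : a ≤ c) (hbd : b ≤ d) :
    ePowMean α l a b ≤ ePowMean α l c d := by
  have hl' : 0 ≤ 1 - l := sub_nonneg.2 hl.2.le
  have hl₀ := hl.1.le
  unfold ePowMean
  split_ifs with h
  · gcongr
  · have hα' : α < 0 := lt_of_le_of_ne hα h
    refine (strictAnti_ennreal_rpow_of_neg (inv_lt_zero.2 hα')).antitone ?_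
    have hac' := (strictAnti_ennreal_rpow_of_neg hα').antitone hac
    have hbd' := (strictAnti_ennreal_rpow_of_neg hα').antitone hbd
    gcongr

lemma ePowMean_lt_left (hα : α ≤ 0) (hl : l ∈ Ioo (0 : ℝ) 1) (hac : a < c) (hb₀ : b ≠ 0)
    (hb : b ≠ ∞) : ePowMean α l a b < ePowMean α l c b := by
  have hl' : 0 < 1 - l := sub_pos.2 hl.2
  unfold ePowMean
  split_ifs with h
  · exact ENNReal.mul_lt_mul_left (ENNReal.rpow_pos (pos_iff_ne_zero.2 hb₀) hb).ne'
      (ENNReal.rpow_ne_top_of_nonneg hl.1.le hb) (ENNReal.strictMono_rpow_of_pos hl' hac)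
  · have hα' : α < 0 := lt_of_le_of_ne hα h
    refine strictAnti_ennreal_rpow_of_neg (inv_lt_zero.2 hα') ?_
    refine ENNReal.add_lt_add_right
      (ENNReal.mul_ne_top ENNReal.ofReal_ne_top (ENNReal.rpow_ne_top_of_ne_zero hb₀ hb)) ?_
    exact ENNReal.mul_lt_mul_right (ENNReal.ofReal_pos.2 hl').ne' ENNReal.ofReal_ne_top
      (strictAnti_ennreal_rpow_of_neg hα' hac)

lemma ePowMean_ne_zero (hα : α ≤ 0) (hl : l ∈ Ioo (0 : ℝ) 1) (ha : a ≠ 0) (hb : b ≠ 0) :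
    ePowMean α l a b ≠ 0 := by
  have hmin : min a b ≠ 0 := (lt_min (pos_iff_ne_zero.2 ha) (pos_iff_ne_zero.2 hb)).ne'
  refine (pos_iff_ne_zero.2 hmin).trans_le ?_ |>.ne'
  calc min a b = ePowMean α l (min a b) (min a b) := (ePowMean_self hl).symm
    _ ≤ ePowMean α l a b := ePowMean_mono hα hl (min_le_left _ _) (min_le_right _ _)

lemma ePowMean_ne_top (hα : α ≤ 0) (hl : l ∈ Ioo (0 : ℝ) 1) (ha : a ≠ ∞) (hb : b ≠ ∞) :
    ePowMean α l a b ≠ ∞ := by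
  refine ((?_ : ePowMean α l a b ≤ max a b).trans_lt (max_lt ha.lt_top hb.lt_top)).ne
  calc ePowMean α l a b ≤ ePowMean α l (max a b) (max a b) :=
        ePowMean_mono hα hl (le_max_left _ _) (le_max_right _ _)
    _ = max a b := ePowMean_self hl

lemma tendsto_ePowMean {ι : Type*} {u : Filter ι} {f g : ι → ℝ≥0∞} (hl : l ∈ Ioo (0 : ℝ) 1)
    (ha : a ≠ 0) (hb : b ≠ 0) (hf : Tendsto f u (𝓝 a)) (hg : Tendsto g u (𝓝 b)) :
    Tendsto (fun i ↦ ePowMean α l (f i) (g i)) u (𝓝 (ePowMean α l a b)) := by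
  have hl' : 0 < 1 - l := sub_pos.2 hl.2
  unfold ePowMean
  split_ifs
  · exact ENNReal.Tendsto.mul (hf.ennrpow_const _)
      (Or.inl fun h ↦ ha ((ENNReal.rpow_eq_zero_iff_of_pos hl').1 h)) (hg.ennrpow_const _)
      (Or.inl fun h ↦ hb ((ENNReal.rpow_eq_zero_iff_of_pos hl.1).1 h))
  · have hfα := ENNReal.Tendsto.const_mul (a := ENNReal.ofReal (1 - l)) (hf.ennrpow_const α)
      (Or.inr ENNReal.ofReal_ne_top)
    have hgα := ENNReal.Tendsto.const_mul (a := ENNReal.ofReal l) (hg.ennrpow_const α)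
      (Or.inr ENNReal.ofReal_ne_top)
    exact (hfα.add hgα).ennrpow_const _

lemma ofReal_powMean {x y : ℝ} (hα : α ≤ 0) (hl : l ∈ Ioo (0 : ℝ) 1) (hx : 0 ≤ x) (hy : 0 ≤ y) :
    ENNReal.ofReal (powMean α l x y) =
      ePowMean α l (ENNReal.ofReal x) (ENNReal.ofReal y) := by
  have hl' : 0 < 1 - l := sub_pos.2 hl.2
  have hl₀ := hl.1
  rcases hx.eq_or_lt with rfl | hx
  · simp [powMean, ePowMean_zero_left hα hl]
  rcases hy.eq_or_lt with rfl | hy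
  · simp [powMean, ePowMean_zero_right hα hl]
  by_cases h : α = 0
  · simp [powMean, ePowMean, h, hx.ne', hy.ne', ENNReal.ofReal_rpow_of_pos, hx, hy,
      ENNReal.ofReal_mul (Real.rpow_nonneg hx.le _)]
  · simp only [powMean, ePowMean, hx.ne', hy.ne', h, EReal.coe_ne_top, EReal.coe_ne_bot,
      EReal.coe_eq_zero, EReal.toReal_coe, or_self, if_false]
    rw [ENNReal.ofReal_rpow_of_pos hx, ENNReal.ofReal_rpow_of_pos hy,
      ← ENNReal.ofReal_mul hl'.le, ← ENNReal.ofReal_mul hl₀.le,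
      ← ENNReal.ofReal_add (by positivity) (by positivity),
      ENNReal.ofReal_rpow_of_pos (by positivity)]

lemma rpow_mul_rpow_add_rpow_mul_rpow_le {p q : ℝ} (hp : 0 < p) (hq : 0 < q) (hpq : p + q = 1) :
    a ^ p * c ^ q + b ^ p * d ^ q ≤ (a + b) ^ p * (c + d) ^ q := by
  have h := ENNReal.inner_le_Lp_mul_Lq Finset.univ ![a ^ p, b ^ p] ![c ^ q, d ^ q]
    (Real.HolderConjugate.inv_inv hp hq hpq)
  simpa [ENNReal.rpow_rpow_inv hp.ne', ENNReal.rpow_rpow_inv hq.ne'] using h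

lemma rpow_mul_rpow_le_weighted_add (hl : l ∈ Ioo (0 : ℝ) 1) :
    c ^ (1 - l) * d ^ l ≤ ENNReal.ofReal (1 - l) * c + ENNReal.ofReal l * d := by
  have hl' : 0 < 1 - l := sub_pos.2 hl.2
  have h := ENNReal.young_inequality (c ^ (1 - l)) (d ^ l)
    (Real.HolderConjugate.inv_inv hl' hl.1 (sub_add_cancel 1 l))
  simpa only [ENNReal.rpow_rpow_inv hl'.ne', ENNReal.rpow_rpow_inv hl.1.ne', div_eq_mul_inv,
    ENNReal.ofReal_inv_of_pos hl', ENNReal.ofReal_inv_of_pos hl.1, inv_inv, mul_comm] using h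

-- Since `w * a ^ α = (w * (a * c) ^ γ) ^ (1 + α) * (w * c) ^ (-α)` for `γ = α / (1 + α)`, this is
-- Hölder's inequality with exponents `1 / (1 + α)` and `1 / (-α)`.
lemma weighted_add_rpow_le (hα : α < 0) (hα₁ : -1 < α) {w₁ w₂ : ℝ≥0∞} (ha : a ≠ ∞)
    (hb : b ≠ ∞) (hc₀ : c ≠ 0) (hc : c ≠ ∞) (hd₀ : d ≠ 0) (hd : d ≠ ∞) :
    w₁ * a ^ α + w₂ * b ^ α ≤
      (w₁ * (a * c) ^ (α / (1 + α)) + w₂ * (b * d) ^ (α / (1 + α))) ^ (1 + α) *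
        (w₁ * c + w₂ * d) ^ (-α) := by
  have hα₂ : 0 < 1 + α := by linarith
  have term {w x y : ℝ≥0∞} (hx : x ≠ ∞) (hy₀ : y ≠ 0) (hy : y ≠ ∞) :
      w * x ^ α = (w * (x * y) ^ (α / (1 + α))) ^ (1 + α) * (w * y) ^ (-α) := by
    rw [ENNReal.mul_rpow_of_nonneg _ _ hα₂.le, ENNReal.mul_rpow_of_nonneg _ _ (neg_nonneg.2 hα.le),
      ← ENNReal.rpow_mul, div_mul_cancel₀ _ hα₂.ne', ENNReal.mul_rpow_of_ne_top hx hy,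
      mul_mul_mul_comm, ← ENNReal.rpow_add_of_nonneg _ _ hα₂.le (neg_nonneg.2 hα.le), mul_assoc,
      ← ENNReal.rpow_add _ _ hy₀ hy]
    simp
  rw [term ha hc₀ hc, term hb hd₀ hd]
  exact rpow_mul_rpow_add_rpow_mul_rpow_le hα₂ (neg_pos.2 hα) (by ring)

lemma ePowMean_mul_le (hα : α ≤ 0) (hα₁ : -1 < α) (hl : l ∈ Ioo (0 : ℝ) 1) (ha₀ : a ≠ 0)
    (ha : a ≠ ∞) (hb₀ : b ≠ 0) (hb : b ≠ ∞) :
    ePowMean (α / (1 + α)) l (a * c) (b * d) ≤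
      ePowMean α l a b * (ENNReal.ofReal (1 - l) * c + ENNReal.ofReal l * d) := by
  have hl' : 0 < 1 - l := sub_pos.2 hl.2
  rcases hα.eq_or_lt with rfl | hα'
  · simp only [zero_div, ePowMean, if_true]
    rw [ENNReal.mul_rpow_of_nonneg _ _ hl'.le, ENNReal.mul_rpow_of_nonneg _ _ hl.1.le,
      mul_mul_mul_comm]
    gcongr
    exact rpow_mul_rpow_le_weighted_add hl
  have hγ : α / (1 + α) < 0 := div_neg_of_neg_of_pos hα' (by linarith)
  rcases eq_or_ne c 0 with rfl | hc₀
  · simp [ePowMean_zero_left hγ.le hl]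
  rcases eq_or_ne d 0 with rfl | hd₀
  · simp [ePowMean_zero_right hγ.le hl]
  by_cases hY : ENNReal.ofReal (1 - l) * c + ENNReal.ofReal l * d = ∞
  · rw [hY, ENNReal.mul_top (ePowMean_ne_zero hα hl ha₀ hb₀)]
    exact le_top
  obtain ⟨hc, hd⟩ : c ≠ ∞ ∧ d ≠ ∞ := by
    constructor <;> rintro rfl <;>
      simp [ENNReal.mul_top, ENNReal.ofReal_eq_zero, not_le, hl.1, hl.2] at hY
  have hY₀ : ENNReal.ofReal (1 - l) * c + ENNReal.ofReal l * d ≠ 0 := by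
    simp [hc₀, ENNReal.ofReal_eq_zero, hl.2]
  have holder := weighted_add_rpow_le (w₁ := ENNReal.ofReal (1 - l)) (w₂ := ENNReal.ofReal l)
    hα' hα₁ ha hb hc₀ hc hd₀ hd
  set Y := ENNReal.ofReal (1 - l) * c + ENNReal.ofReal l * d
  simp only [ePowMean, hα'.ne, hγ.ne, if_false]
  set X := ENNReal.ofReal (1 - l) * (a * c) ^ (α / (1 + α)) +
    ENNReal.ofReal l * (b * d) ^ (α / (1 + α))
  calc X ^ (α / (1 + α))⁻¹
      = (X ^ (1 + α) * Y ^ (-α)) ^ α⁻¹ * Y := by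
        have hYα : Y ^ (-α) ≠ 0 ∧ Y ^ (-α) ≠ ∞ := by
          simp [ENNReal.rpow_eq_zero_iff, ENNReal.rpow_eq_top_iff, hY₀, hY]
        rw [ENNReal.mul_rpow_eq_ite, if_neg (by simp [hYα]), ← ENNReal.rpow_mul,
          ← ENNReal.rpow_mul, neg_mul, mul_inv_cancel₀ hα'.ne, ENNReal.rpow_neg_one, mul_assoc,
          ENNReal.inv_mul_cancel hY₀ hY, mul_one, inv_div, div_eq_mul_inv]
    _ ≤ _ := by
        gcongr ?_ * _
        exact (strictAnti_ennreal_rpow_of_neg (inv_lt_zero.2 hα')).antitone holder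

end ePowMean

/-! ### The one-dimensional Borell–Brascamp–Lieb inequality -/

-- Translating `A` by `min B` and `B` by `max A` puts both inside `A + B`, where they overlap in at
-- most the point `max A + min B`.
lemma volume_add_volume_le_of_isCompact {A B : Set ℝ} (hA : IsCompact A) (hB : IsCompact B)
    (hA₀ : A.Nonempty) (hB₀ : B.Nonempty) : volume A + volume B ≤ volume (A + B) := by
  obtain ⟨a, ha, ha_max⟩ := hA.exists_isGreatest hA₀
  obtain ⟨b, hb, hb_min⟩ := hB.exists_isLeast hB₀
  have inter_subset : (b +ᵥ A) ∩ (a +ᵥ B) ⊆ {a + b} := by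
    rintro _ ⟨⟨x, hx, rfl⟩, ⟨y, hy, hxy⟩⟩
    have hxa := ha_max hx
    have hby := hb_min hy
    simp only [vadd_eq_add, mem_singleton_iff] at hxy ⊢
    linarith
  have union_subset : (b +ᵥ A) ∪ (a +ᵥ B) ⊆ A + B := by
    rintro _ (⟨x, hx, rfl⟩ | ⟨y, hy, rfl⟩)
    · exact ⟨x, hx, b, hb, add_comm _ _⟩
    · exact ⟨a, ha, y, hy, rfl⟩
  have volume_inter : volume ((b +ᵥ A) ∩ (a +ᵥ B)) = 0 :=
    measure_mono_null inter_subset (measure_singleton _)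
  calc volume A + volume B = volume (b +ᵥ A) + volume (a +ᵥ B) := by simp only [measure_vadd]
    _ = volume ((b +ᵥ A) ∪ (a +ᵥ B)) := by
        rw [← measure_union_add_inter _ (hB.vadd a).measurableSet, volume_inter, add_zero]
    _ ≤ volume (A + B) := measure_mono union_subset

lemma measure_eq_iSup_isCompact_of_mem {X : Type*} [TopologicalSpace X] [MeasurableSpace X]
    {μ : Measure X} [μ.InnerRegularCompactLTTop] [SigmaFinite μ] {A : Set X} (hA : MeasurableSet A)
    {a : X} (ha : a ∈ A) : μ A = ⨆ K : {K : Set X // K ⊆ A ∧ IsCompact K ∧ a ∈ K}, μ K := by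
  refine le_antisymm ?_ (iSup_le fun K ↦ measure_mono K.2.1)
  rw [hA.measure_eq_iSup_isCompact]
  refine iSup₂_le fun K hKA ↦ iSup_le fun hK ↦ (measure_mono (subset_insert a K)).trans ?_
  exact le_iSup (fun K : {K : Set X // K ⊆ A ∧ IsCompact K ∧ a ∈ K} ↦ μ K)
    ⟨insert a K, insert_subset ha hKA, hK.insert a, mem_insert a K⟩

lemma volume_add_volume_le {A B : Set ℝ} (hA : MeasurableSet A) (hB : MeasurableSet B)
    (hA₀ : A.Nonempty) (hB₀ : B.Nonempty) : volume A + volume B ≤ volume (A + B) := by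
  obtain ⟨a, ha⟩ := hA₀
  obtain ⟨b, hb⟩ := hB₀
  have : Nonempty {K : Set ℝ // K ⊆ A ∧ IsCompact K ∧ a ∈ K} :=
    ⟨{a}, singleton_subset_iff.2 ha, isCompact_singleton, rfl⟩
  have : Nonempty {K : Set ℝ // K ⊆ B ∧ IsCompact K ∧ b ∈ K} :=
    ⟨{b}, singleton_subset_iff.2 hb, isCompact_singleton, rfl⟩
  rw [measure_eq_iSup_isCompact_of_mem hA ha, measure_eq_iSup_isCompact_of_mem hB hb]
  refine ENNReal.iSup_add_iSup_le fun K L ↦ ?_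
  exact (volume_add_volume_le_of_isCompact K.2.2.1 L.2.2.1 ⟨a, K.2.2.2⟩ ⟨b, L.2.2.2⟩).trans
    (measure_mono (add_subset_add K.2.1 L.2.1))

lemma lintegral_eq_lintegral_measure_ofReal_lt {X : Type*} [MeasurableSpace X] (μ : Measure X)
    [SFinite μ] {f : X → ℝ≥0∞} (hf : Measurable f) :
    ∫⁻ x, f x ∂μ = ∫⁻ t in Ioi (0 : ℝ), μ {x | ENNReal.ofReal t < f x} := by
  have volume_slice (c : ℝ≥0∞) :
      volume.restrict (Ioi (0 : ℝ)) {t | ENNReal.ofReal t < c} = c := by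
    rw [Measure.restrict_apply (measurableSet_lt (by fun_prop) (by fun_prop))]
    rcases eq_or_ne c ∞ with rfl | hc
    · simp
    · have : {t | ENNReal.ofReal t < c} ∩ Ioi 0 = Ioo 0 c.toReal := by
        ext t
        rw [inter_comm]
        exact and_congr_right fun ht ↦ ENNReal.ofReal_lt_iff_lt_toReal (le_of_lt ht) hc
      rw [this, Real.volume_Ioo, sub_zero, ENNReal.ofReal_toReal hc]
  have hS : MeasurableSet {p : X × ℝ | ENNReal.ofReal p.2 < f p.1} :=
    measurableSet_lt (by fun_prop) (by fun_prop)
  calc ∫⁻ x, f x ∂μ = μ.prod (volume.restrict (Ioi (0 : ℝ))) {p | ENNReal.ofReal p.2 < f p.1} := by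
        rw [Measure.prod_apply hS]
        exact lintegral_congr fun x ↦ (volume_slice (f x)).symm
    _ = ∫⁻ t in Ioi (0 : ℝ), μ {x | ENNReal.ofReal t < f x} := Measure.prod_apply_symm hS

lemma weighted_lintegral_add_le_of_iSup_eq {l : ℝ} (hl : l ∈ Ioo (0 : ℝ) 1) {f g h : ℝ → ℝ≥0∞}
    (hf : Measurable f) (hg : Measurable g) (hh : Measurable h) (hfg : ⨆ x, f x = ⨆ x, g x)
    (hfgh : ∀ x y, min (f x) (g y) ≤ h ((1 - l) * x + l * y)) :
    ENNReal.ofReal (1 - l) * (∫⁻ x, f x) + ENNReal.ofReal l * (∫⁻ x, g x) ≤ ∫⁻ x, h x := by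
  have hl' : 0 < 1 - l := sub_pos.2 hl.2
  have superlevel {u : ℝ → ℝ≥0∞} (hu : Measurable u) (t : ℝ) :
      MeasurableSet {x | ENNReal.ofReal t < u x} := measurableSet_lt measurable_const hu
  have volume_superlevel {c : ℝ} (hc : 0 < c) (u : ℝ → ℝ≥0∞) (t : ℝ) :
      ENNReal.ofReal c * volume {x | ENNReal.ofReal t < u x} =
        volume (c • {x | ENNReal.ofReal t < u x}) := by
    simp [Measure.addHaar_smul, abs_of_pos hc]
  simp only [lintegral_eq_lintegral_measure_ofReal_lt volume, hf, hg, hh]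
  rw [← lintegral_const_mul' _ _ ENNReal.ofReal_ne_top,
    ← lintegral_const_mul' _ _ ENNReal.ofReal_ne_top]
  refine (le_lintegral_add _ _).trans (lintegral_mono fun t ↦ ?_)
  rcases eq_empty_or_nonempty {x | ENNReal.ofReal t < f x} with hF | hF
  · have hG : {x | ENNReal.ofReal t < g x} = ∅ := by
      simp only [eq_empty_iff_forall_notMem, mem_ofPred_eq, not_lt] at hF ⊢
      exact iSup_le_iff.1 (hfg ▸ iSup_le hF)
    simp [hF, hG]
  · have hG : {x | ENNReal.ofReal t < g x}.Nonempty := by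
      obtain ⟨x, hx⟩ := hF
      exact lt_iSup_iff.1 (hfg ▸ lt_iSup_iff.2 ⟨x, hx⟩)
    simp only [volume_superlevel hl', volume_superlevel hl.1]
    refine (volume_add_volume_le ((superlevel hf t).const_smul₀ _)
      ((superlevel hg t).const_smul₀ _) hF.smul_set hG.smul_set).trans (measure_mono ?_)
    rintro _ ⟨_, ⟨x, hx, rfl⟩, _, ⟨y, hy, rfl⟩, rfl⟩
    exact (lt_min hx hy).trans_le (hfgh x y)

/-- The measure `μ` satisfies the Borell–Brascamp–Lieb inequality for the weight `l`, with exponent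
`α` for the functions and `γ` for their integrals. Lebesgue measure on `ℝⁿ` satisfies it for
`γ = α / (1 + n * α)`; keeping `γ` free lets the inequality pass to product measures. -/
def BorellBrascampLieb {E : Type*} [AddCommGroup E] [Module ℝ E] [MeasurableSpace E]
    (μ : Measure E) (α γ l : ℝ) : Prop :=
  ∀ ⦃f g h : E → ℝ≥0∞⦄, Measurable f → Measurable g → Measurable h →
    (∀ x y, ePowMean α l (f x) (g y) ≤ h ((1 - l) • x + l • y)) →
      ePowMean γ l (∫⁻ x, f x ∂μ) (∫⁻ x, g x ∂μ) ≤ ∫⁻ x, h x ∂μ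

lemma min_inv_mul_le_inv_ePowMean_mul {α l : ℝ} {a b c A B : ℝ≥0∞} (hα : α ≤ 0)
    (hl : l ∈ Ioo (0 : ℝ) 1) (hA₀ : A ≠ 0) (hA : A ≠ ∞) (hB₀ : B ≠ 0) (hB : B ≠ ∞) (ha : a ≤ A)
    (hc : ePowMean α l a b ≤ c) : min (A⁻¹ * a) (B⁻¹ * b) ≤ (ePowMean α l A B)⁻¹ * c := by
  set t := min (A⁻¹ * a) (B⁻¹ * b)
  rcases eq_or_ne t 0 with ht₀ | ht₀
  · simp [ht₀]
  have ht : t ≠ ∞ :=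
    ne_top_of_le_ne_top (ENNReal.mul_ne_top (ENNReal.inv_ne_top.2 hA₀) (ne_top_of_le_ne_top hA ha))
      (min_le_left _ _)
  have htA : t * A ≤ a := by
    rw [← ENNReal.le_div_iff_mul_le (.inl hA₀) (.inl hA), div_eq_mul_inv, mul_comm a]
    exact min_le_left _ _
  have htB : t * B ≤ b := by
    rw [← ENNReal.le_div_iff_mul_le (.inl hB₀) (.inl hB), div_eq_mul_inv, mul_comm b]
    exact min_le_right _ _
  rw [mul_comm, ← div_eq_mul_inv, ENNReal.le_div_iff_mul_le (.inl (ePowMean_ne_zero hα hl hA₀ hB₀))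
    (.inl (ePowMean_ne_top hα hl hA hB)), ← ePowMean_mul_mul ht₀ ht]
  exact (ePowMean_mono hα hl htA htB).trans hc

lemma ePowMean_lintegral_le_of_iSup_ne_top {α l : ℝ} (hα : α ≤ 0) (hα₁ : -1 < α)
    (hl : l ∈ Ioo (0 : ℝ) 1) {f g h : ℝ → ℝ≥0∞} (hf : Measurable f) (hg : Measurable g)
    (hh : Measurable h) (hfgh : ∀ x y, ePowMean α l (f x) (g y) ≤ h ((1 - l) * x + l * y))
    (hf_top : ⨆ x, f x ≠ ∞) (hg_top : ⨆ x, g x ≠ ∞) :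
    ePowMean (α / (1 + α)) l (∫⁻ x, f x) (∫⁻ x, g x) ≤ ∫⁻ x, h x := by
  have hγ : α / (1 + α) ≤ 0 := div_nonpos_of_nonpos_of_nonneg hα (by linarith)
  set A := ⨆ x, f x
  set B := ⨆ x, g x
  rcases eq_or_ne A 0 with hA₀ | hA₀
  · simp [ENNReal.iSup_eq_zero.1 hA₀, ePowMean_zero_left hγ hl]
  rcases eq_or_ne B 0 with hB₀ | hB₀
  · simp [ENNReal.iSup_eq_zero.1 hB₀, ePowMean_zero_right hγ hl]
  set M := ePowMean α l A B
  have hM₀ : M ≠ 0 := ePowMean_ne_zero hα hl hA₀ hB₀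
  have hM : M ≠ ∞ := ePowMean_ne_top hα hl hf_top hg_top
  have normalized := weighted_lintegral_add_le_of_iSup_eq hl (hf.const_mul A⁻¹) (hg.const_mul B⁻¹)
    (hh.const_mul M⁻¹)
    (by rw [← ENNReal.mul_iSup, ← ENNReal.mul_iSup, ENNReal.inv_mul_cancel hA₀ hf_top,
      ENNReal.inv_mul_cancel hB₀ hg_top])
    (fun x y ↦ min_inv_mul_le_inv_ePowMean_mul hα hl hA₀ hf_top hB₀ hg_top (le_iSup f x)
      (hfgh x y))
  rw [lintegral_const_mul _ hf, lintegral_const_mul _ hg, lintegral_const_mul _ hh] at normalized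
  have mul_inv_mul {s : ℝ≥0∞} (hs₀ : s ≠ 0) (hs : s ≠ ∞) (t : ℝ≥0∞) : s * (s⁻¹ * t) = t := by
    rw [← mul_assoc, ENNReal.mul_inv_cancel hs₀ hs, one_mul]
  calc ePowMean (α / (1 + α)) l (∫⁻ x, f x) (∫⁻ x, g x)
      = ePowMean (α / (1 + α)) l (A * (A⁻¹ * ∫⁻ x, f x)) (B * (B⁻¹ * ∫⁻ x, g x)) := by
        rw [mul_inv_mul hA₀ hf_top, mul_inv_mul hB₀ hg_top]
    _ ≤ M * (M⁻¹ * ∫⁻ x, h x) :=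
        (ePowMean_mul_le hα hα₁ hl hA₀ hf_top hB₀ hg_top).trans (mul_le_mul_right normalized M)
    _ = ∫⁻ x, h x := mul_inv_mul hM₀ hM _

lemma tendsto_lintegral_min_natCast {X : Type*} [MeasurableSpace X] {μ : Measure X} {f : X → ℝ≥0∞}
    (hf : Measurable f) :
    Tendsto (fun k : ℕ ↦ ∫⁻ x, min (f x) k ∂μ) atTop (𝓝 (∫⁻ x, f x ∂μ)) := by
  refine lintegral_tendsto_of_tendsto_of_monotone (fun k ↦ (hf.min measurable_const).aemeasurable)
    (.of_forall fun x i j hij ↦ min_le_min_left _ (Nat.cast_le.2 hij)) (.of_forall fun x ↦ ?_)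
  simpa using tendsto_const_nhds.min ENNReal.tendsto_nat_nhds_top

lemma borellBrascampLieb_volume_real {α l : ℝ} (hα : α ≤ 0) (hα₁ : -1 < α)
    (hl : l ∈ Ioo (0 : ℝ) 1) :
    BorellBrascampLieb (volume : Measure ℝ) α (α / (1 + α)) l := by
  intro f g h hf hg hh hfgh
  have hγ : α / (1 + α) ≤ 0 := div_nonpos_of_nonpos_of_nonneg hα (by linarith)
  rcases eq_or_ne (∫⁻ x, f x) 0 with hf₀ | hf₀
  · simp [hf₀, ePowMean_zero_left hγ hl]
  rcases eq_or_ne (∫⁻ x, g x) 0 with hg₀ | hg₀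
  · simp [hg₀, ePowMean_zero_right hγ hl]
  have iSup_min_ne_top (u : ℝ → ℝ≥0∞) (k : ℕ) : ⨆ x, min (u x) k ≠ ∞ :=
    ne_top_of_le_ne_top (ENNReal.natCast_ne_top k) (iSup_le fun _ ↦ min_le_right _ _)
  refine le_of_tendsto' (tendsto_ePowMean hl hf₀ hg₀ (tendsto_lintegral_min_natCast hf)
    (tendsto_lintegral_min_natCast hg)) fun k ↦ ?_
  refine ePowMean_lintegral_le_of_iSup_ne_top hα hα₁ hl (hf.min measurable_const)
    (hg.min measurable_const) hh (fun x y ↦ ?_) (iSup_min_ne_top f k) (iSup_min_ne_top g k)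
  exact (ePowMean_mono hα hl (min_le_left _ _) (min_le_left _ _)).trans (hfgh x y)

/-! ### The Borell–Brascamp–Lieb inequality for Haar measures -/

section BorellBrascampLieb

variable {E F : Type*} [AddCommGroup E] [Module ℝ E] [MeasurableSpace E]
  [AddCommGroup F] [Module ℝ F] [MeasurableSpace F] {α β γ l : ℝ}

lemma borellBrascampLieb_dirac (x : E) : BorellBrascampLieb (Measure.dirac x) α α l := by
  intro f g h hf hg hh hfgh
  rw [lintegral_dirac' _ hf, lintegral_dirac' _ hg, lintegral_dirac' _ hh]
  simpa only [← add_smul, sub_add_cancel, one_smul] using hfgh x x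

namespace BorellBrascampLieb

lemma prod {μ : Measure E} {ν : Measure F} [SFinite ν] (hμ : BorellBrascampLieb μ β γ l)
    (hν : BorellBrascampLieb ν α β l) : BorellBrascampLieb (μ.prod ν) α γ l := by
  intro f g h hf hg hh hfgh
  rw [lintegral_prod _ hf.aemeasurable, lintegral_prod _ hg.aemeasurable,
    lintegral_prod _ hh.aemeasurable]
  refine hμ hf.lintegral_prod_right' hg.lintegral_prod_right' hh.lintegral_prod_right' fun x x' ↦ ?_
  exact hν (hf.comp measurable_prodMk_left) (hg.comp measurable_prodMk_left)
    (hh.comp measurable_prodMk_left) fun y y' ↦ hfgh (x, y) (x', y')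

lemma map {μ : Measure E} (hμ : BorellBrascampLieb μ α γ l) (L : E →ₗ[ℝ] F) (hL : Measurable L) :
    BorellBrascampLieb (μ.map L) α γ l := by
  intro f g h hf hg hh hfgh
  rw [lintegral_map hf hL, lintegral_map hg hL, lintegral_map hh hL]
  refine hμ (hf.comp hL) (hg.comp hL) (hh.comp hL) fun x y ↦ ?_
  simpa only [Function.comp_apply, map_add, map_smul] using hfgh (L x) (L y)

lemma smul {μ : Measure E} (hμ : BorellBrascampLieb μ α γ l) {c : ℝ≥0} (hc : c ≠ 0) :
    BorellBrascampLieb (c • μ) α γ l := by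
  intro f g h hf hg hh hfgh
  simp only [lintegral_smul_measure, ENNReal.smul_def, smul_eq_mul]
  rw [ePowMean_mul_mul (ENNReal.coe_ne_zero.2 hc) ENNReal.coe_ne_top]
  exact mul_le_mul_right (hμ hf hg hh hfgh) _

end BorellBrascampLieb

end BorellBrascampLieb

section AddHaar

variable {E F : Type*} [NormedAddCommGroup E] [NormedSpace ℝ E] [MeasurableSpace E] [BorelSpace E]
  [NormedAddCommGroup F] [NormedSpace ℝ F] [FiniteDimensional ℝ F] [MeasurableSpace F]
  [BorelSpace F] {α γ l : ℝ}

lemma BorellBrascampLieb.of_continuousLinearEquiv {ν : Measure E} [ν.IsAddHaarMeasure]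
    (hν : BorellBrascampLieb ν α γ l) (L : E ≃L[ℝ] F) (μ : Measure F) [μ.IsAddHaarMeasure] :
    BorellBrascampLieb μ α γ l := by
  have : (ν.map L).IsAddHaarMeasure := L.isAddHaarMeasure_map ν
  have : ProperSpace F := FiniteDimensional.proper ℝ F
  rw [Measure.isAddLeftInvariant_eq_smul μ (ν.map L)]
  exact (hν.map L.toLinearEquiv.toLinearMap L.continuous.measurable).smul
    (Measure.addHaarScalarFactor_pos_of_isAddHaarMeasure μ (ν.map L)).ne'

lemma borellBrascampLieb_volume_pi (hα : α ≤ 0) (hl : l ∈ Ioo (0 : ℝ) 1) (n : ℕ)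
    (hn : 0 < 1 + n * α) :
    BorellBrascampLieb (volume : Measure (Fin n → ℝ)) α (α / (1 + n * α)) l := by
  induction n with
  | zero =>
    simpa [Measure.volume_pi_eq_dirac 0] using borellBrascampLieb_dirac (0 : Fin 0 → ℝ)
  | succ n ih =>
    push_cast at hn ⊢
    have hn' : 0 < 1 + n * α := by linarith
    set β := α / (1 + n * α)
    have hβ : β ≤ 0 := div_nonpos_of_nonpos_of_nonneg hα hn'.le
    have one_add_β : 1 + β = (1 + (n + 1) * α) / (1 + n * α) := by
      rw [eq_div_iff hn'.ne', add_mul, div_mul_cancel₀ _ hn'.ne']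
      ring
    have hβ₁ : -1 < β := by linarith [div_pos hn hn']
    have hγ : β / (1 + β) = α / (1 + (n + 1) * α) := by
      rw [one_add_β, div_div_div_cancel_right₀ hn'.ne']
    rw [← hγ]
    exact ((borellBrascampLieb_volume_real hβ hβ₁ hl).prod (ih hn')).of_continuousLinearEquiv
      (Fin.consEquivL ℝ fun _ ↦ ℝ) volume

theorem borellBrascampLieb_addHaar (hα : α ≤ 0) (hn : 0 < 1 + finrank ℝ F * α)
    (hl : l ∈ Ioo (0 : ℝ) 1) (μ : Measure F) [μ.IsAddHaarMeasure] :
    BorellBrascampLieb μ α (α / (1 + finrank ℝ F * α)) l :=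
  (borellBrascampLieb_volume_pi hα hl _ hn).of_continuousLinearEquiv
    (ContinuousLinearEquiv.ofFinrankEq (finrank_fin_fun ℝ)) μ

end AddHaar

/-! ### Strictness for integrals over distinct convex bodies -/

lemma not_subset_vadd_of_isCompact {E : Type*} [AddCommGroup E] [Module ℝ E] [TopologicalSpace E]
    [SeparatingDual ℝ E] {K : Set E} (hK : IsCompact K) (hK₀ : K.Nonempty) {v : E} (hv : v ≠ 0) :
    ¬ K ⊆ v +ᵥ K := by
  intro hsub
  obtain ⟨f, hf⟩ := SeparatingDual.exists_eq_one (R := ℝ) hv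
  obtain ⟨z, hz, hz_min⟩ := hK.exists_isMinOn hK₀ f.continuous.continuousOn
  obtain ⟨w, hw, rfl⟩ := hsub hz
  have hle : f (v + w) ≤ f w := hz_min hw
  rw [map_add, hf] at hle
  linarith

lemma interior_diff_vadd_nonempty_of_convex {E : Type*} [NormedAddCommGroup E] [NormedSpace ℝ E]
    {K : Set E} (hK : Convex ℝ K) (hKc : IsCompact K) (hK₀ : (interior K).Nonempty) {v : E}
    (hv : v ≠ 0) : (interior K \ (v +ᵥ K)).Nonempty := by
  rw [sdiff_nonempty]
  intro hsub
  refine not_subset_vadd_of_isCompact hKc (hK₀.mono interior_subset) hv ?_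
  calc K ⊆ closure K := subset_closure
    _ = closure (interior K) := (hK.closure_interior_eq_closure_of_nonempty_interior hK₀).symm
    _ ⊆ v +ᵥ K := closure_minimal hsub (hKc.vadd v).isClosed

lemma exists_one_lt_mul_ePowMean_le {E : Type*} [AddCommGroup E] [Module ℝ E] [TopologicalSpace E]
    [ContinuousAdd E] [ContinuousSMul ℝ E] {α l : ℝ} (hα : α ≤ 0) (hl : l ∈ Ioo (0 : ℝ) 1)
    {φ : E → ℝ≥0} (hφ : Continuous φ) (hφ₀ : ∀ x, φ x ≠ 0)
    (hconc : ∀ x y, x ≠ y → ePowMean α l (φ x) (φ y) < φ ((1 - l) • x + l • y)) {P Q : Set E}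
    (hP : IsCompact P) (hQ : IsCompact Q) (hP₀ : P.Nonempty) (hQ₀ : Q.Nonempty)
    (hPQ : Disjoint P Q) :
    ∃ κ : ℝ≥0∞, 1 < κ ∧
      ∀ x ∈ P, ∀ y ∈ Q, κ * ePowMean α l (φ x) (φ y) ≤ φ ((1 - l) • x + l • y) := by
  have hφ_ne (x : E) : (φ x : ℝ≥0∞) ≠ 0 := ENNReal.coe_ne_zero.2 (hφ₀ x)
  have hM₀ (p : E × E) : ePowMean α l (φ p.1) (φ p.2) ≠ 0 :=
    ePowMean_ne_zero hα hl (hφ_ne p.1) (hφ_ne p.2)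
  have hM (p : E × E) : ePowMean α l (φ p.1) (φ p.2) ≠ ∞ :=
    ePowMean_ne_top hα hl ENNReal.coe_ne_top ENNReal.coe_ne_top
  have hφ' : Continuous fun x ↦ (φ x : ℝ≥0∞) := ENNReal.continuous_coe.comp hφ
  have ratio_continuous : Continuous fun p : E × E ↦
      (φ ((1 - l) • p.1 + l • p.2) : ℝ≥0∞) / ePowMean α l (φ p.1) (φ p.2) := by
    refine continuous_iff_continuousAt.2 fun p ↦ ?_
    refine ENNReal.Tendsto.div (hφ'.comp (by fun_prop)).continuousAt (.inr (hM₀ p)) ?_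
      (.inr ENNReal.coe_ne_top)
    exact tendsto_ePowMean hl (hφ_ne p.1) (hφ_ne p.2) (hφ'.comp continuous_fst).continuousAt
      (hφ'.comp continuous_snd).continuousAt
  obtain ⟨p, hp, hp_min⟩ :=
    (hP.prod hQ).exists_isMinOn (hP₀.prod hQ₀) ratio_continuous.continuousOn
  refine ⟨φ ((1 - l) • p.1 + l • p.2) / ePowMean α l (φ p.1) (φ p.2), ?_, fun x hx y hy ↦ ?_⟩
  · rw [ENNReal.lt_div_iff_mul_lt (.inl (hM₀ p)) (.inl (hM p)), one_mul]
    exact hconc p.1 p.2 (hPQ.ne_of_mem hp.1 hp.2)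
  · rw [← ENNReal.le_div_iff_mul_le (.inl (hM₀ (x, y))) (.inl (hM (x, y)))]
    exact hp_min (mk_mem_prod hx hy)

lemma ePowMean_mul_left_le {α l : ℝ} {κ a b : ℝ≥0∞} (hα : α ≤ 0) (hl : l ∈ Ioo (0 : ℝ) 1)
    (hκ : 1 ≤ κ) (ha : a ≠ 0) (hb : b ≠ 0) : ePowMean α l (κ * a) b ≤ κ * ePowMean α l a b := by
  rcases eq_or_ne κ ∞ with rfl | hκ_top
  · simp [ENNReal.top_mul (ePowMean_ne_zero hα hl ha hb)]
  rw [← ePowMean_mul_mul (one_pos.trans_le hκ).ne' hκ_top]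
  exact ePowMean_mono hα hl le_rfl (le_mul_of_one_le_left' hκ)

lemma BorellBrascampLieb.ePowMean_setLIntegral_le {E : Type*} [AddCommGroup E] [Module ℝ E]
    [MeasurableSpace E] {μ : Measure E} {α γ l : ℝ} (hμ : BorellBrascampLieb μ α γ l) (hα : α ≤ 0)
    (hl : l ∈ Ioo (0 : ℝ) 1) {f g h : E → ℝ≥0∞} (hf : Measurable f) (hg : Measurable g)
    (hh : Measurable h) {A B C : Set E} (hA : MeasurableSet A) (hB : MeasurableSet B)
    (hC : MeasurableSet C) (hABC : (1 - l) • A + l • B ⊆ C)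
    (hfgh : ∀ x ∈ A, ∀ y ∈ B, ePowMean α l (f x) (g y) ≤ h ((1 - l) • x + l • y)) :
    ePowMean γ l (∫⁻ x in A, f x ∂μ) (∫⁻ x in B, g x ∂μ) ≤ ∫⁻ x in C, h x ∂μ := by
  rw [← lintegral_indicator hA, ← lintegral_indicator hB, ← lintegral_indicator hC]
  refine hμ (hf.indicator hA) (hg.indicator hB) (hh.indicator hC) fun x y ↦ ?_
  by_cases hx : x ∈ A
  · by_cases hy : y ∈ B
    · have hz : (1 - l) • x + l • y ∈ C :=
        hABC (add_mem_add (smul_mem_smul_set hx) (smul_mem_smul_set hy))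
      simpa only [indicator_of_mem, hx, hy, hz] using hfgh x hx y hy
    · simp [hy, ePowMean_zero_right hα hl]
  · simp [hx, ePowMean_zero_left hα hl]

open scoped Classical in
lemma setLIntegral_lt_setLIntegral_piecewise_mul {X : Type*} [MeasurableSpace X] {μ : Measure X}
    {f : X → ℝ≥0∞} {κ : ℝ≥0∞} {A P : Set X} (hf : Measurable f) (hf₀ : ∀ x, f x ≠ 0)
    (hf_top : ∀ x, f x ≠ ∞) (hfA : ∫⁻ x in A, f x ∂μ ≠ ∞) (hP : MeasurableSet P) (hPA : P ⊆ A)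
    (hμP : μ P ≠ 0) (hκ : 1 < κ) :
    ∫⁻ x in A, f x ∂μ < ∫⁻ x in A, P.piecewise (fun x ↦ κ * f x) f x ∂μ := by
  have lt_of_mem {x : X} (hx : x ∈ P) : f x < P.piecewise (fun x ↦ κ * f x) f x := by
    simpa only [piecewise_eq_of_mem _ _ _ hx, one_mul]
      using ENNReal.mul_lt_mul_left (hf₀ x) (hf_top x) hκ
  refine lintegral_strict_mono_of_ae_le_of_ae_lt_on (s := P)
    ((hf.const_mul κ).piecewise hP hf).aemeasurable hfA (.of_forall fun x ↦ ?_) ?_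
    (.of_forall fun x hx ↦ lt_of_mem hx)
  · by_cases hx : x ∈ P
    · exact (lt_of_mem hx).le
    · rw [piecewise_eq_of_notMem _ _ _ hx]
  · rwa [Measure.restrict_apply hP, inter_eq_self_of_subset_left hPA]

lemma setLIntegral_ne_zero_of_interior_nonempty {X : Type*} [TopologicalSpace X]
    [MeasurableSpace X] {μ : Measure X} [μ.IsOpenPosMeasure] {f : X → ℝ≥0∞} (hf : Measurable f)
    (hf₀ : ∀ x, f x ≠ 0) {B : Set X} (hB : (interior B).Nonempty) : ∫⁻ x in B, f x ∂μ ≠ 0 := by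
  have support_eq : Function.support f = univ := eq_univ_of_forall hf₀
  rw [← pos_iff_ne_zero, lintegral_pos_iff_support hf, support_eq, Measure.restrict_apply_univ]
  exact Measure.measure_pos_of_nonempty_interior μ hB

open scoped Classical in
lemma BorellBrascampLieb.ePowMean_setLIntegral_lt {E : Type*} [NormedAddCommGroup E]
    [NormedSpace ℝ E] [ProperSpace E] [MeasurableSpace E] [BorelSpace E] {μ : Measure E}
    [μ.IsOpenPosMeasure] [IsFiniteMeasureOnCompacts μ] {α γ l : ℝ}
    (hμ : BorellBrascampLieb μ α γ l) (hα : α ≤ 0) (hγ : γ ≤ 0) (hl : l ∈ Ioo (0 : ℝ) 1)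
    {φ : E → ℝ≥0} (hφ : Continuous φ) (hφ₀ : ∀ x, φ x ≠ 0)
    (hconc : ∀ x y, x ≠ y → ePowMean α l (φ x) (φ y) < φ ((1 - l) • x + l • y)) {A B C : Set E}
    (hA : IsCompact A) (hB : IsCompact B) (hC : MeasurableSet C)
    (hABC : (1 - l) • A + l • B ⊆ C) (hAB : (interior A \ B).Nonempty)
    (hB₀ : (interior B).Nonempty) :
    ePowMean γ l (∫⁻ x in A, φ x ∂μ) (∫⁻ x in B, φ x ∂μ) < ∫⁻ x in C, φ x ∂μ := by
  have hφ_ne (x : E) : (φ x : ℝ≥0∞) ≠ 0 := ENNReal.coe_ne_zero.2 (hφ₀ x)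
  have hφm : Measurable fun x ↦ (φ x : ℝ≥0∞) := hφ.measurable.coe_nnreal_ennreal
  have setLIntegral_ne_top {K : Set E} (hK : IsCompact K) : ∫⁻ x in K, φ x ∂μ ≠ ∞ :=
    (setLIntegral_lt_top_of_isCompact hK.measure_lt_top.ne hK hφ).ne
  obtain ⟨p, hp⟩ := hAB
  obtain ⟨r, hr, hPAB⟩ := Metric.nhds_basis_closedBall.mem_iff.1
    ((isOpen_interior.sdiff hB.isClosed).mem_nhds hp)
  set P := Metric.closedBall p r
  obtain ⟨κ, hκ, hκPB⟩ := exists_one_lt_mul_ePowMean_le hα hl hφ hφ₀ hconc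
    (isCompact_closedBall p r) hB ⟨p, Metric.mem_closedBall_self hr.le⟩ (hB₀.mono interior_subset)
    (disjoint_left.2 fun x hx ↦ (hPAB hx).2)
  set ψ : E → ℝ≥0∞ := P.piecewise (fun x ↦ κ * φ x) (fun x ↦ φ x)
  have hψm : Measurable ψ := (hφm.const_mul κ).piecewise measurableSet_closedBall hφm
  have hψ (x : E) (_ : x ∈ A) (y : E) (hy : y ∈ B) :
      ePowMean α l (ψ x) (φ y) ≤ φ ((1 - l) • x + l • y) := by
    by_cases hx : x ∈ P
    · simp only [ψ, piecewise_eq_of_mem _ _ _ hx]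
      exact (ePowMean_mul_left_le hα hl hκ.le (hφ_ne x) (hφ_ne y)).trans (hκPB x hx y hy)
    · simp only [ψ, piecewise_eq_of_notMem _ _ _ hx]
      rcases eq_or_ne x y with rfl | hxy
      · rw [ePowMean_self hl, ← add_smul, sub_add_cancel, one_smul]
      · exact (hconc x y hxy).le
  have hAψ : ∫⁻ x in A, φ x ∂μ < ∫⁻ x in A, ψ x ∂μ :=
    setLIntegral_lt_setLIntegral_piecewise_mul hφm hφ_ne (fun _ ↦ ENNReal.coe_ne_top)
      (setLIntegral_ne_top hA) measurableSet_closedBall (fun x hx ↦ interior_subset (hPAB hx).1)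
      (Metric.measure_closedBall_pos μ p hr).ne' hκ
  calc ePowMean γ l (∫⁻ x in A, φ x ∂μ) (∫⁻ x in B, φ x ∂μ)
      < ePowMean γ l (∫⁻ x in A, ψ x ∂μ) (∫⁻ x in B, φ x ∂μ) :=
        ePowMean_lt_left hγ hl hAψ (setLIntegral_ne_zero_of_interior_nonempty hφm hφ_ne hB₀)
          (setLIntegral_ne_top hB)
    _ ≤ ∫⁻ x in C, φ x ∂μ := hμ.ePowMean_setLIntegral_le hα hl hψm hφm hφm hA.measurableSet
        hB.measurableSet hC hABC hψ

/-! ### Strictly power-concave functions -/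

lemma powMean_nonneg {α : EReal} {l a b : ℝ} (hl : l ∈ Ioo (0 : ℝ) 1) (ha : 0 ≤ a) (hb : 0 ≤ b) :
    0 ≤ powMean α l a b := by
  have hl' : 0 < 1 - l := sub_pos.2 hl.2
  have hl₀ := hl.1
  unfold powMean
  split_ifs
  · rfl
  · exact ha.trans (le_max_left a b)
  · exact le_min ha hb
  · positivity
  · positivity

lemma exists_neg_of_strictConcaveOn_univ {V : Type*} [AddCommGroup V] [Module ℝ V] [Nontrivial V]
    {f : V → ℝ} (hf : StrictConcaveOn ℝ univ f) : ∃ z, f z < 0 := by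
  by_contra! hf₀
  obtain ⟨p, q, hpq⟩ : ∃ p q, f p < f q := by
    obtain ⟨x, y, hxy⟩ := exists_pair_ne V
    obtain h | h := min_lt_iff.1 (hf.lt_on_openSegment (mem_univ x) (mem_univ y) hxy
      (midpoint_mem_openSegment x y))
    exacts [⟨x, _, h⟩, ⟨y, _, h⟩]
  have hq : 0 < f q := (hf₀ p).trans_lt hpq
  set l := (f q - f p) / (2 * f q)
  have hl₀ : 0 < l := div_pos (sub_pos.2 hpq) (by positivity)
  have hl₁ : l < 1 := (div_lt_one (by positivity)).2 (by linarith [hf₀ p])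
  have hlq : (1 - l) * f q = (f q + f p) / 2 := by
    simp only [l]
    field_simp
    ring
  -- The ray from `q` through `p` leaves the region `0 ≤ f` before the point `z` for which
  -- `p = (1 - l) q + l z`, because `f p < (1 - l) * f q`.
  set z := q + l⁻¹ • (p - q)
  have hz : (1 - l) • q + l • z = p := by
    rw [smul_add, smul_inv_smul₀ hl₀.ne']
    module
  have hne : q ≠ z := by
    simpa [z, hl₀.ne', sub_eq_zero] using fun h : p = q ↦ hpq.ne (congrArg f h)
  have hconc := hf.2 (mem_univ q) (mem_univ z) hne (sub_pos.2 hl₁) hl₀ (sub_add_cancel 1 l)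
  rw [hz, smul_eq_mul, smul_eq_mul, hlq] at hconc
  linarith [mul_nonneg hl₀.le (hf₀ z)]

namespace StrictAlphaConcave

variable {V : Type*} [AddCommGroup V] [Module ℝ V] [Nontrivial V] {φ : V → ℝ}

lemma pos {α : EReal} (hconc : StrictAlphaConcave α φ) (hφ : ∀ v, 0 ≤ φ v) (v : V) : 0 < φ v := by
  obtain ⟨w, hw⟩ := exists_ne (0 : V)
  have hne : v - w ≠ v + w := by
    have : IsAddTorsionFree V := .of_isTorsionFree ℝ V
    rw [sub_eq_add_neg, Ne, add_right_inj]
    exact (self_ne_neg.2 hw).symm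
  have h := hconc (v - w) (v + w) hne 2⁻¹ (by norm_num) (by norm_num)
  have hmid : (1 - 2⁻¹ : ℝ) • (v - w) + (2⁻¹ : ℝ) • (v + w) = v := by module
  rw [hmid] at h
  exact (powMean_nonneg ⟨by norm_num, by norm_num⟩ (hφ _) (hφ _)).trans_lt h

lemma strictConcaveOn_rpow {α : ℝ} (hα : 0 < α) (hconc : StrictAlphaConcave α φ)
    (hφ : ∀ v, 0 ≤ φ v) : StrictConcaveOn ℝ univ fun v ↦ φ v ^ α := by
  refine ⟨convex_univ, fun x _ y _ hxy a b ha hb hab ↦ ?_⟩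
  have hpos := hconc.pos hφ
  obtain rfl : a = 1 - b := by linarith
  have hx := hpos x
  have hy := hpos y
  have h := hconc x y hxy b hb (by linarith)
  simp only [powMean, hx.ne', hy.ne', hα.ne', EReal.coe_ne_top, EReal.coe_ne_bot,
    EReal.coe_eq_zero, EReal.toReal_coe, or_self, if_false] at h
  have hsum : 0 < (1 - b) * φ x ^ α + b * φ y ^ α := by positivity
  exact (Real.rpow_inv_lt_iff_of_pos hsum.le (hφ _) hα).1 h

lemma nonpos {α : ℝ} (hconc : StrictAlphaConcave α φ) (hφ : ∀ v, 0 ≤ φ v) : α ≤ 0 := by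
  by_contra! hα
  obtain ⟨z, hz⟩ := exists_neg_of_strictConcaveOn_univ (hconc.strictConcaveOn_rpow hα hφ)
  exact hz.not_ge (Real.rpow_nonneg (hφ z) α)

end StrictAlphaConcave

lemma setIntegral_comp_sub_left {G F : Type*} [AddCommGroup G] [MeasurableSpace G]
    [MeasurableAdd₂ G] [MeasurableNeg G] [NormedAddCommGroup F] [NormedSpace ℝ F] (μ : Measure G)
    [μ.IsAddLeftInvariant] [μ.IsNegInvariant] (f : G → F) (s : Set G) (x : G) :
    ∫ y in s, f (x - y) ∂μ = ∫ z in x +ᵥ -s, f z ∂μ := by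
  have preimage_eq : (fun y ↦ x - y) ⁻¹' (x +ᵥ -s) = s := by
    ext y
    simp [mem_vadd_set_iff_neg_vadd_mem]
  simpa only [preimage_eq] using (Measure.measurePreserving_sub_left μ x).setIntegral_preimage_emb
    (MeasurableEquiv.subLeft x).measurableEmbedding f (x +ᵥ -s)

lemma smul_vadd_add_smul_vadd_subset_of_convex {V : Type*} [AddCommGroup V] [Module ℝ V] {K : Set V}
    (hK : Convex ℝ K) {l : ℝ} (hl : l ∈ Ioo (0 : ℝ) 1) (x y : V) :
    (1 - l) • (x +ᵥ K) + l • (y +ᵥ K) ⊆ ((1 - l) • x + l • y) +ᵥ K := by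
  rintro _ ⟨_, ⟨_, ⟨u, hu, rfl⟩, rfl⟩, _, ⟨_, ⟨w, hw, rfl⟩, rfl⟩, rfl⟩
  refine ⟨(1 - l) • u + l • w, hK hu hw (sub_pos.2 hl.2).le hl.1.le (sub_add_cancel 1 l), ?_⟩
  simp only [vadd_eq_add, smul_add]
  abel

lemma ofReal_setIntegral_of_isCompact {X : Type*} [TopologicalSpace X] [T2Space X]
    [MeasurableSpace X] [OpensMeasurableSpace X] {μ : Measure X} [IsFiniteMeasureOnCompacts μ]
    {φ : X → ℝ} (hφ : Continuous φ) (hφ₀ : ∀ x, 0 ≤ φ x) {K : Set X} (hK : IsCompact K) :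
    ENNReal.ofReal (∫ x in K, φ x ∂μ) = ∫⁻ x in K, (φ x).toNNReal ∂μ :=
  ofReal_integral_eq_lintegral_ofReal (hφ.continuousOn.integrableOn_compact hK) (.of_forall hφ₀)

section FiniteDimensional

variable {E : Type*} [NormedAddCommGroup E] [NormedSpace ℝ E] [FiniteDimensional ℝ E]
  [MeasurableSpace E] [BorelSpace E] (μ : Measure E) [μ.IsAddHaarMeasure] {α : ℝ} {φ : E → ℝ}

lemma StrictAlphaConcave.powMean_setIntegral_lt [Nontrivial E] (hconc : StrictAlphaConcave α φ)
    (hα : 0 < 1 + finrank ℝ E * α) (hcont : Continuous φ) (hnn : ∀ v, 0 ≤ φ v) {l : ℝ}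
    (hl : l ∈ Ioo (0 : ℝ) 1) {A B C : Set E} (hA : IsCompact A) (hB : IsCompact B)
    (hC : IsCompact C) (hABC : (1 - l) • A + l • B ⊆ C) (hAB : (interior A \ B).Nonempty)
    (hB₀ : (interior B).Nonempty) :
    powMean ((α / (1 + finrank ℝ E * α) : ℝ) : EReal) l (∫ x in A, φ x ∂μ) (∫ x in B, φ x ∂μ) <
      ∫ x in C, φ x ∂μ := by
  have : ProperSpace E := FiniteDimensional.proper ℝ E
  have hα₀ : α ≤ 0 := hconc.nonpos hnn
  have hγ : α / (1 + finrank ℝ E * α) ≤ 0 := div_nonpos_of_nonpos_of_nonneg hα₀ hα.le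
  have ePowMean_lt (x y : E) (hxy : x ≠ y) : ePowMean α l (φ x).toNNReal (φ y).toNNReal <
      (φ ((1 - l) • x + l • y)).toNNReal := by
    change ePowMean α l (ENNReal.ofReal (φ x)) (ENNReal.ofReal (φ y)) < ENNReal.ofReal _
    rw [← ofReal_powMean hα₀ hl (hnn x) (hnn y),
      ENNReal.ofReal_lt_ofReal_iff (hconc.pos hnn _)]
    exact hconc x y hxy l hl.1 hl.2
  refine (ENNReal.ofReal_lt_ofReal_iff'.1 ?_).1
  rw [ofReal_powMean hγ hl (integral_nonneg hnn) (integral_nonneg hnn),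
    ofReal_setIntegral_of_isCompact hcont hnn hA, ofReal_setIntegral_of_isCompact hcont hnn hB,
    ofReal_setIntegral_of_isCompact hcont hnn hC]
  exact (borellBrascampLieb_addHaar hα₀ hα hl μ).ePowMean_setLIntegral_lt hα₀ hγ hl
    (continuous_real_toNNReal.comp hcont) (fun x ↦ (Real.toNNReal_pos.2 (hconc.pos hnn x)).ne')
    ePowMean_lt hA hB hC.measurableSet hABC hAB hB₀

theorem stmt9_general {Ω : Set E} (hconv : Convex ℝ Ω) (hcomp : IsCompact Ω)
    (hint : (interior Ω).Nonempty) (hα : 0 < 1 + finrank ℝ E * α) (hcont : Continuous φ)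
    (hnn : ∀ v, 0 ≤ φ v) (hconc : StrictAlphaConcave α φ) :
    StrictAlphaConcave ((α / (1 + finrank ℝ E * α) : ℝ) : EReal)
      (fun x ↦ ∫ y in Ω, φ (x - y) ∂μ) := by
  intro x y hxy l hl₀ hl₁
  have : Nontrivial E := nontrivial_of_ne x y hxy
  have hK_int : (interior (-Ω)).Nonempty :=
    (Homeomorph.neg E).preimage_interior Ω ▸ hint.neg
  have interior_translate (z : E) : (interior (z +ᵥ -Ω)).Nonempty := by
    simpa only [interior_vadd, vadd_set_nonempty] using hK_int
  have diff_nonempty : (interior (x +ᵥ -Ω) \ (y +ᵥ -Ω)).Nonempty := by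
    simpa only [vadd_vadd, vadd_eq_add, sub_add_cancel] using
      interior_diff_vadd_nonempty_of_convex (hconv.neg.vadd x) (hcomp.neg.vadd x)
        (interior_translate x) (sub_ne_zero.2 hxy.symm)
  simp only [setIntegral_comp_sub_left]
  exact hconc.powMean_setIntegral_lt μ hα hcont hnn ⟨hl₀, hl₁⟩ (hcomp.neg.vadd x)
    (hcomp.neg.vadd y) (hcomp.neg.vadd _)
    (smul_vadd_add_smul_vadd_subset_of_convex hconv.neg ⟨hl₀, hl₁⟩ x y) diff_nonempty
    (interior_translate y)

end FiniteDimensional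

theorem stmt9 {m : ℕ} (hm : 0 < m) (Ω : Set (EuclideanSpace ℝ (Fin m)))
    (hconv : Convex ℝ Ω) (hcomp : IsCompact Ω) (hint : (interior Ω).Nonempty)
    (α : ℝ) (hα : -1 / (m : ℝ) < α)
    (φ : EuclideanSpace ℝ (Fin m) → ℝ) (hcont : Continuous φ)
    (hnn : ∀ v, 0 ≤ φ v) (hconc : StrictAlphaConcave (α : EReal) φ) :
    StrictAlphaConcave ((α / (1 + (m : ℝ) * α) : ℝ) : EReal)
      (fun x : EuclideanSpace ℝ (Fin m) => ∫ y in Ω, φ (x - y)) := by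
  have hα' : -1 < α * m := (div_lt_iff₀ (Nat.cast_pos.2 hm)).1 hα
  simpa only [finrank_euclideanSpace_fin] using stmt9_general volume hconv hcomp hint
    (by rw [finrank_euclideanSpace_fin]; linarith) hcont hnn hconc
end
end

section
/- Let Ω be a convex body in ℝ^m (a compact convex set with nonempty interior). For each t > 0, the function W_Ω(·,t) : ℝ^m → ℝ has exactly one critical point, i.e. there is a unique x ∈ ℝ^m at which the Fréchet derivative of x ↦ W_Ω(x,t) vanishes; moreover this point is the unique maximum point of W_Ω(·,t) (the unique hot spot of Ω at time t). -/
open MeasureTheory Metric Set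

noncomputable section

/-- Weierstrass' (heat) kernel on `ℝ^m`. -/
def heatKernel (m : ℕ) (z : EuclideanSpace ℝ (Fin m)) (t : ℝ) : ℝ :=
  (4 * Real.pi * t) ^ (-(m : ℝ) / 2) * Real.exp (-‖z‖ ^ 2 / (4 * t))

open Filter Module
open scoped Topology ENNReal NNReal

/-!
For convex `Ω` the transform `G x = ∫_Ω exp (-s ‖x - y‖²) dy` is log-concave. In the coordinates
`(p, q) ↦ (p + q, p - q)` on `Ω × Ω`, the product `G (a + d) * G (a - d)` becomes an integral over
`p` of Gaussian transforms at `d`, with parameter `2 s`, of symmetric convex sections of `Ω × Ω`.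
Log-concavity thus reduces to Anderson's inequality: the transform of a symmetric convex body is
largest at the origin.

The same identity proves Anderson's inequality. If, at parameter `2 s`, the transform of every
symmetric convex set at `d` is at most `B²` times its value at `0`, then at parameter `s` it is at
most `B` times that value. Comparing a set with its dilate by `1 + 2^k` gives the crude constant
`(1 + 2^k)^m exp (s ‖d‖²)` at parameter `2^k s`. For every `B > 1` it is
at most `B^(2^k)` once `k` is large, so `k` halvings of the parameter give the constant `B` at
parameter `s`, and `B → 1`.

A critical point of `G` is a global maximum by log-concavity. Two of them would make `G` constant on
the segment between them, hence by analyticity on the whole line, although `G` is positive and tends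
to zero at infinity.
-/

section Concavity

variable {E : Type*}

theorem convex_of_isClosed_of_midpoint_mem [AddCommGroup E] [Module ℝ E] [TopologicalSpace E]
    [IsTopologicalAddGroup E] [ContinuousSMul ℝ E] {S : Set E} (hS : IsClosed S)
    (hmid : ∀ x ∈ S, ∀ y ∈ S, midpoint ℝ x y ∈ S) : Convex ℝ S := by
  rw [convex_iff_segment_subset]
  rintro x hx y hy
  rw [segment_eq_image_lineMap]
  rintro _ ⟨t, ⟨ht₀, ht₁⟩, rfl⟩
  -- The parameters of points of `S` nearest to `t` on either side have a nearer midpoint, unless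
  -- they equal `t`.
  set T : Set ℝ := AffineMap.lineMap x y ⁻¹' S
  have hT : IsClosed T := hS.preimage AffineMap.lineMap_continuous
  obtain ⟨a, ⟨haT, ha₀, hat⟩, ha⟩ := (isCompact_Icc.inter_left hT).exists_isGreatest
    (⟨0, by simpa [T], left_mem_Icc.2 ht₀⟩ : (T ∩ Icc 0 t).Nonempty)
  obtain ⟨b, ⟨hbT, htb, hb₁⟩, hb⟩ := (isCompact_Icc.inter_left hT).exists_isLeast
    (⟨1, by simpa [T], right_mem_Icc.2 ht₁⟩ : (T ∩ Icc t 1).Nonempty)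
  have hmT : midpoint ℝ a b ∈ T := by
    simpa only [T, mem_preimage, AffineMap.map_midpoint] using hmid _ haT _ hbT
  have hab : a ≤ b := hat.trans htb
  suffices a = t from this ▸ haT
  rcases le_total (midpoint ℝ a b) t with hmt | htm
  · have := ha ⟨hmT, ha₀.trans ((left_le_midpoint (k := ℝ)).2 hab), hmt⟩
    exact hat.antisymm (htb.trans ((midpoint_le_left (k := ℝ)).1 this))
  · have := hb ⟨hmT, htm, ((midpoint_le_right (k := ℝ)).2 hab).trans hb₁⟩
    exact hat.antisymm (htb.trans ((right_le_midpoint (k := ℝ)).1 this))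

theorem concaveOn_univ_of_le_midpoint [AddCommGroup E] [Module ℝ E] [TopologicalSpace E]
    [IsTopologicalAddGroup E] [ContinuousSMul ℝ E] {f : E → ℝ} (hf : Continuous f)
    (hmid : ∀ x y, midpoint ℝ (f x) (f y) ≤ f (midpoint ℝ x y)) : ConcaveOn ℝ univ f := by
  refine concaveOn_of_convex_hypograph (convex_of_isClosed_of_midpoint_mem ?_ ?_)
  · simp only [mem_univ, true_and]
    exact isClosed_le continuous_snd (hf.comp continuous_fst)
  · rintro ⟨x, a⟩ ⟨-, hx⟩ ⟨y, b⟩ ⟨-, hy⟩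
    exact ⟨trivial, (midpoint_le_midpoint hx hy).trans (hmid x y)⟩

theorem le_of_concaveOn_of_hasFDerivAt_zero [NormedAddCommGroup E] [NormedSpace ℝ E] {s : Set E}
    {f : E → ℝ} (hf : ConcaveOn ℝ s f) {x y : E} (hx : x ∈ s) (hy : y ∈ s)
    (hfx : HasFDerivAt f (0 : E →L[ℝ] ℝ) x) : f y ≤ f x := by
  have hline : HasDerivAt (f ∘ AffineMap.lineMap (k := ℝ) x y) 0 0 := by
    have hfx' : HasFDerivAt f (0 : E →L[ℝ] ℝ) (AffineMap.lineMap x y (0 : ℝ)) := by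
      rwa [AffineMap.lineMap_apply_zero]
    simpa using hfx'.comp_hasDerivAt 0 AffineMap.hasDerivAt_lineMap
  have hslope := (hf.comp_affineMap (AffineMap.lineMap x y)).slope_le_of_hasDerivAt
    (x := 0) (y := 1) (by simpa) (by simpa) one_pos hline
  simpa [slope_def_field] using hslope

end Concavity

section ChangeOfVariables

variable {E : Type*} [NormedAddCommGroup E] [NormedSpace ℝ E] [FiniteDimensional ℝ E]
  [MeasurableSpace E] [BorelSpace E] (μ : Measure E) [μ.IsAddHaarMeasure]

theorem setLIntegral_eq_mul_setLIntegral_comp_smul {r : ℝ} (hr : 0 < r) (f : E → ℝ≥0∞)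
    (K : Set E) :
    ∫⁻ y in K, f y ∂μ =
      ENNReal.ofReal (r ^ finrank ℝ E) * ∫⁻ y in (r • ·) ⁻¹' K, f (r • y) ∂μ := by
  let e : E ≃ᵐ E := (Homeomorph.smulOfNeZero r hr.ne').toMeasurableEquiv
  have hrd : 0 < r ^ finrank ℝ E := by positivity
  have hmap : ENNReal.ofReal (r ^ finrank ℝ E) • μ.map e = μ := by
    have : μ.map e = ENNReal.ofReal |(r ^ finrank ℝ E)⁻¹| • μ := μ.map_addHaar_smul hr.ne'
    rw [this, smul_smul, ← ENNReal.ofReal_mul hrd.le, abs_of_pos (inv_pos.2 hrd),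
      mul_inv_cancel₀ hrd.ne', ENNReal.ofReal_one, one_smul]
  calc ∫⁻ y in K, f y ∂μ
    _ = ENNReal.ofReal (r ^ finrank ℝ E) * ∫⁻ y in K, f y ∂μ.map e := by
      conv_lhs => rw [← hmap, Measure.restrict_smul, lintegral_smul_measure, smul_eq_mul]
    _ = _ := by
      rw [e.restrict_map, lintegral_map_equiv]
      rfl

theorem setLIntegral_le_mul_setLIntegral_comp_smul {K : Set E} (hK : StarConvex ℝ 0 K) {r : ℝ}
    (hr : 1 ≤ r) (f : E → ℝ≥0∞) :
    ∫⁻ y in K, f y ∂μ ≤ ENNReal.ofReal (r ^ finrank ℝ E) * ∫⁻ y in K, f (r • y) ∂μ := by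
  have hr₀ : 0 < r := one_pos.trans_le hr
  have hpre : (r • ·) ⁻¹' K ⊆ K := fun y hy => by
    simpa [hr₀.ne'] using hK.smul_mem hy (inv_nonneg.2 hr₀.le) (inv_le_one_of_one_le₀ hr)
  rw [setLIntegral_eq_mul_setLIntegral_comp_smul μ hr₀]
  gcongr

theorem lintegral_prod_eq_lintegral_add_sub {H : E × E → ℝ≥0∞} (hH : Measurable H) :
    ∫⁻ z, H z ∂(μ.prod μ) =
      ENNReal.ofReal (2 ^ finrank ℝ E) * ∫⁻ p, ∫⁻ q, H (p + q, p - q) ∂μ ∂μ := by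
  have hscale (x : E) : ∫⁻ y, H (x, y) ∂μ =
      ENNReal.ofReal (2 ^ finrank ℝ E) * ∫⁻ p, H (x, (2 : ℝ) • p - x) ∂μ := by
    rw [← lintegral_sub_right_eq_self (fun y => H (x, y)) x]
    simpa using setLIntegral_eq_mul_setLIntegral_comp_smul μ two_pos (fun y => H (x, y - x)) univ
  have hmeas : Measurable fun z : E × E => H (z.1, (2 : ℝ) • z.2 - z.1) := by fun_prop
  calc ∫⁻ z, H z ∂(μ.prod μ)
    _ = ∫⁻ x, ∫⁻ y, H (x, y) ∂μ ∂μ := lintegral_prod _ hH.aemeasurable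
    _ = ENNReal.ofReal (2 ^ finrank ℝ E) * ∫⁻ x, ∫⁻ p, H (x, (2 : ℝ) • p - x) ∂μ ∂μ := by
      simp_rw [hscale]
      exact lintegral_const_mul _ hmeas.lintegral_prod_right'
    _ = ENNReal.ofReal (2 ^ finrank ℝ E) * ∫⁻ p, ∫⁻ x, H (x, (2 : ℝ) • p - x) ∂μ ∂μ := by
      rw [lintegral_lintegral_swap hmeas.aemeasurable]
    _ = ENNReal.ofReal (2 ^ finrank ℝ E) * ∫⁻ p, ∫⁻ q, H (p + q, p - q) ∂μ ∂μ := by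
      congr! 3 with p
      refine (lintegral_add_left_eq_self (fun x => H (x, (2 : ℝ) • p - x)) p).symm.trans ?_
      exact lintegral_congr fun q => by rw [show (2 : ℝ) • p - (p + q) = p - q by module]

end ChangeOfVariables

section GaussKernel

variable {E : Type*} [NormedAddCommGroup E]

/-- The unnormalised Gaussian `exp (-s ‖z‖²)`; up to a constant factor, `s = 1 / (4 t)` gives the
heat kernel at time `t`. -/
def gaussKernel (s : ℝ) (z : E) : ℝ :=
  Real.exp (-s * ‖z‖ ^ 2)

theorem gaussKernel_pos (s : ℝ) (z : E) : 0 < gaussKernel s z :=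
  Real.exp_pos _

theorem norm_gaussKernel_le_one {s : ℝ} (hs : 0 ≤ s) (z : E) : ‖gaussKernel s z‖ ≤ 1 := by
  have : 0 ≤ s * ‖z‖ ^ 2 := by positivity
  simpa [gaussKernel]

theorem gaussKernel_neg (s : ℝ) (z : E) : gaussKernel s (-z) = gaussKernel s z := by
  simp only [gaussKernel, norm_neg]

@[fun_prop]
theorem continuous_gaussKernel (s : ℝ) : Continuous (gaussKernel (E := E) s) := by
  unfold gaussKernel
  fun_prop

theorem tendsto_gaussKernel_cobounded {s : ℝ} (hs : 0 < s) :
    Tendsto (gaussKernel s) (Bornology.cobounded E) (𝓝 0) :=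
  Real.tendsto_exp_atBot.comp <| ((tendsto_pow_atTop two_ne_zero).comp
    tendsto_norm_cobounded_atTop).const_mul_atTop_of_neg (neg_lt_zero.2 hs)

variable [InnerProductSpace ℝ E]

theorem gaussKernel_add_mul_gaussKernel_sub (s : ℝ) (u v : E) :
    gaussKernel s (u + v) * gaussKernel s (u - v) =
      gaussKernel (2 * s) u * gaussKernel (2 * s) v := by
  simp only [gaussKernel, ← Real.exp_add]
  congr 1
  linear_combination -s * parallelogram_law_with_norm ℝ u v

theorem gaussKernel_add_smul (s r : ℝ) (z v : E) :
    gaussKernel s (z + r • v) =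
      Real.exp (-s * (r ^ 2 * ‖v‖ ^ 2)) *
        (gaussKernel s z * Real.exp (r * (-2 * s * inner ℝ z v))) := by
  simp only [gaussKernel, ← Real.exp_add]
  congr 1
  rw [norm_add_sq_real, inner_smul_right, norm_smul, mul_pow, Real.norm_eq_abs, sq_abs]
  ring

theorem hasFDerivAt_gaussKernel (s : ℝ) (z : E) :
    HasFDerivAt (gaussKernel s) ((gaussKernel s z * (-s * 2)) • innerSL ℝ z) z := by
  refine ((((hasFDerivAt_id z).norm_sq).const_mul (-s)).exp).congr_fderiv ?_
  ext v
  simp only [gaussKernel, id_eq, neg_mul, ContinuousLinearMap.comp_id, neg_smul, smul_neg,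
    neg_apply, smul_apply, coe_innerSL_apply, nsmul_eq_mul, Nat.cast_ofNat, smul_eq_mul, mul_neg]
  ring

theorem norm_fderiv_gaussKernel_le {s : ℝ} (hs : 0 ≤ s) (z : E) :
    ‖(gaussKernel s z * (-s * 2)) • innerSL ℝ z‖ ≤ 1 + s := by
  have hexp : (1 + s * ‖z‖ ^ 2) * gaussKernel s z ≤ 1 := by
    rw [gaussKernel, neg_mul, Real.exp_neg, ← div_eq_mul_inv, div_le_one (Real.exp_pos _), add_comm]
    exact Real.add_one_le_exp _
  calc ‖(gaussKernel s z * (-s * 2)) • innerSL ℝ z‖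
    _ = s * (2 * ‖z‖) * gaussKernel s z := by
      rw [norm_smul, innerSL_apply_norm, norm_mul, norm_mul, norm_neg,
        Real.norm_of_nonneg (gaussKernel_pos s z).le, Real.norm_of_nonneg hs, Real.norm_two]
      ring
    _ ≤ (1 + s) * (1 + s * ‖z‖ ^ 2) * gaussKernel s z := by
      refine mul_le_mul_of_nonneg_right ?_ (gaussKernel_pos s z).le
      linarith [mul_nonneg hs (sq_nonneg (‖z‖ - 1)), sq_nonneg (s * ‖z‖)]
    _ ≤ (1 + s) * 1 := by
      rw [mul_assoc]
      gcongr
    _ = 1 + s := mul_one _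

end GaussKernel

section SymmetricSection

variable {E : Type*} [AddCommGroup E]

/-- The set of all `q` such that `p` is the midpoint of two points `p ± q` of `Ω`. It is the slice
of `Ω × Ω` in the coordinates `(p, q) ↦ (p + q, p - q)`. -/
def symmSection (Ω : Set E) (p : E) : Set E :=
  {q | p + q ∈ Ω ∧ p - q ∈ Ω}

theorem absConvex_symmSection [Module ℝ E] {Ω : Set E} (hΩ : Convex ℝ Ω) (p : E) :
    AbsConvex ℝ (symmSection Ω p) := by
  have hconv : Convex ℝ (symmSection Ω p) := by
    have hadd := hΩ.affine_preimage (AffineMap.const ℝ E p + AffineMap.id ℝ E)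
    have hsub := hΩ.affine_preimage (AffineMap.const ℝ E p - AffineMap.id ℝ E)
    exact hadd.inter hsub
  refine ⟨(balanced_iff_neg_mem hconv).2 fun {q} hq => ?_, hconv⟩
  simpa [symmSection, sub_eq_add_neg, and_comm] using hq

theorem measurableSet_symmSection [MeasurableSpace E] [MeasurableAdd E] [MeasurableSub E]
    {Ω : Set E} (hΩ : MeasurableSet Ω) (p : E) : MeasurableSet (symmSection Ω p) :=
  (measurable_const_add p hΩ).inter (measurable_const_sub p hΩ)

end SymmetricSection

section Dilation

variable {E : Type*} [NormedAddCommGroup E] [NormedSpace ℝ E]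

theorem norm_sq_le_norm_sub_smul_sq_add (d y : E) {δ : ℝ} (hδ : 0 < δ) :
    ‖y‖ ^ 2 ≤ ‖d - (1 + δ) • y‖ ^ 2 + ‖d‖ ^ 2 / δ := by
  set w := d - (1 + δ) • y
  have htri : (1 + δ) * ‖y‖ ≤ ‖d‖ + ‖w‖ := by
    calc (1 + δ) * ‖y‖ = ‖d - w‖ := by
          rw [sub_sub_cancel, norm_smul, Real.norm_of_nonneg (by positivity)]
      _ ≤ ‖d‖ + ‖w‖ := norm_sub_le d w
  have hamgm : (‖d‖ + ‖w‖) ^ 2 ≤ (1 + δ) * (‖w‖ ^ 2 + ‖d‖ ^ 2 / δ) := by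
    have : 0 ≤ (‖d‖ - δ * ‖w‖) ^ 2 / δ := by positivity
    linear_combination this + (δ * ‖w‖ ^ 2 - 2 * ‖d‖ * ‖w‖ - ‖d‖ ^ 2) * mul_inv_cancel₀ hδ.ne'
  have : (1 + δ) * ((1 + δ) * ‖y‖ ^ 2) ≤ (1 + δ) * (‖w‖ ^ 2 + ‖d‖ ^ 2 / δ) :=
    calc (1 + δ) * ((1 + δ) * ‖y‖ ^ 2) = ((1 + δ) * ‖y‖) ^ 2 := by ring
      _ ≤ (‖d‖ + ‖w‖) ^ 2 := by gcongr
      _ ≤ _ := hamgm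
  calc ‖y‖ ^ 2 ≤ (1 + δ) * ‖y‖ ^ 2 := le_mul_of_one_le_left (by positivity) (by linarith)
    _ ≤ _ := le_of_mul_le_mul_left this (by positivity)

variable [MeasurableSpace E]

/-- The transform `x ↦ ∫ exp (-s ‖x - y‖²) dμ(y)` of a measure `μ`, with values in `ℝ≥0∞`, so that
the inequalities between transforms need no integrability. -/
def lgaussTransform (μ : Measure E) (s : ℝ) (x : E) : ℝ≥0∞ :=
  ∫⁻ y, ENNReal.ofReal (gaussKernel s (x - y)) ∂μ

variable [FiniteDimensional ℝ E] [BorelSpace E] {μ : Measure E} [μ.IsAddHaarMeasure]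
  {s : ℝ} {K : Set E}

theorem lgaussTransform_restrict_neg (hK : Balanced ℝ K) (x : E) :
    lgaussTransform (μ.restrict K) s (-x) = lgaussTransform (μ.restrict K) s x := by
  have hneg := (Measure.measurePreserving_neg μ).setLIntegral_comp_preimage_emb
    (MeasurableEquiv.neg E).measurableEmbedding
    (fun y => ENNReal.ofReal (gaussKernel s (-x - y))) K
  calc lgaussTransform (μ.restrict K) s (-x)
    _ = ∫⁻ y in -K, ENNReal.ofReal (gaussKernel s (-x - -y)) ∂μ := hneg.symm
    _ = lgaussTransform (μ.restrict K) s x := by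
      rw [hK.neg_eq]
      exact lintegral_congr fun y => by rw [← neg_sub', gaussKernel_neg]

theorem lgaussTransform_le_of_starConvex (hK : StarConvex ℝ 0 K) (hs : 0 ≤ s) {δ : ℝ}
    (hδ : 0 < δ) (d : E) :
    lgaussTransform (μ.restrict K) s d ≤
      ENNReal.ofReal ((1 + δ) ^ finrank ℝ E * Real.exp (s * (‖d‖ ^ 2 / δ))) *
        lgaussTransform (μ.restrict K) s 0 := by
  have hker (y : E) : gaussKernel s (d - (1 + δ) • y) ≤
      Real.exp (s * (‖d‖ ^ 2 / δ)) * gaussKernel s (0 - y) := by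
    rw [gaussKernel, gaussKernel, ← Real.exp_add, zero_sub, norm_neg, Real.exp_le_exp]
    have := mul_le_mul_of_nonneg_left (norm_sq_le_norm_sub_smul_sq_add d y hδ) hs
    linarith
  calc lgaussTransform (μ.restrict K) s d
    _ ≤ ENNReal.ofReal ((1 + δ) ^ finrank ℝ E) *
          ∫⁻ y in K, ENNReal.ofReal (gaussKernel s (d - (1 + δ) • y)) ∂μ :=
      setLIntegral_le_mul_setLIntegral_comp_smul μ hK (le_add_of_nonneg_right hδ.le) _
    _ ≤ ENNReal.ofReal ((1 + δ) ^ finrank ℝ E) * ∫⁻ y in K,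
          ENNReal.ofReal (Real.exp (s * (‖d‖ ^ 2 / δ))) *
            ENNReal.ofReal (gaussKernel s (0 - y)) ∂μ := by
      gcongr with y
      rw [← ENNReal.ofReal_mul (Real.exp_pos _).le]
      exact ENNReal.ofReal_le_ofReal (hker y)
    _ = _ := by
      rw [lintegral_const_mul' _ _ ENNReal.ofReal_ne_top, ← mul_assoc,
        ← ENNReal.ofReal_mul (by positivity)]
      rfl

end Dilation

section Anderson

theorem exists_one_add_two_pow_pow_mul_le_pow {B : ℝ} (hB : 1 < B) (n : ℕ) (C : ℝ) :
    ∃ k : ℕ, (1 + 2 ^ k) ^ n * C ≤ B ^ 2 ^ k := by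
  -- `N ^ n / B ^ N → 0` along `N = 2 ^ k + 1`; the factor `B` absorbs the extra `1` in `B ^ N`.
  have hlim := ((tendsto_pow_const_div_const_pow_of_one_lt n hB).comp
    ((tendsto_add_atTop_nat 1).comp (tendsto_pow_atTop_atTop_of_one_lt one_lt_two))).mul_const
      (C * B)
  rw [zero_mul] at hlim
  obtain ⟨k, hk⟩ := (hlim.eventually_le_const one_pos).exists
  have hB₀ : 0 < B := one_pos.trans hB
  refine ⟨k, (div_le_one (pow_pos hB₀ _)).1 ?_⟩
  convert hk using 1
  simp only [Function.comp_apply]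
  push_cast
  rw [pow_succ]
  field_simp
  ring

variable {E : Type*} [NormedAddCommGroup E] [InnerProductSpace ℝ E] [FiniteDimensional ℝ E]
  [MeasurableSpace E] [BorelSpace E] {μ : Measure E} [μ.IsAddHaarMeasure] {s : ℝ} {Ω K : Set E}

theorem lgaussTransform_add_mul_lgaussTransform_sub (hΩ : MeasurableSet Ω) (a d : E) :
    lgaussTransform (μ.restrict Ω) s (a + d) * lgaussTransform (μ.restrict Ω) s (a - d) =
      ENNReal.ofReal (2 ^ finrank ℝ E) *
        ∫⁻ p, ENNReal.ofReal (gaussKernel (2 * s) (a - p)) *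
          lgaussTransform (μ.restrict (symmSection Ω p)) (2 * s) d ∂μ := by
  let H : E × E → ℝ≥0∞ := (Ω ×ˢ Ω).indicator fun z =>
    ENNReal.ofReal (gaussKernel s (a + d - z.1)) * ENNReal.ofReal (gaussKernel s (a - d - z.2))
  have hH : Measurable H := Measurable.indicator (by fun_prop) (hΩ.prod hΩ)
  have hHpq (p q : E) : H (p + q, p - q) = (symmSection Ω p).indicator (fun q =>
      ENNReal.ofReal (gaussKernel (2 * s) (a - p)) *
        ENNReal.ofReal (gaussKernel (2 * s) (d - q))) q := by
    have hprod : gaussKernel s (a + d - (p + q)) * gaussKernel s (a - d - (p - q)) =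
        gaussKernel (2 * s) (a - p) * gaussKernel (2 * s) (d - q) := by
      rw [← gaussKernel_add_mul_gaussKernel_sub]
      congr 2 <;> abel
    simp only [H, indicator, ← ENNReal.ofReal_mul (gaussKernel_pos _ _).le, hprod]
    rfl
  calc lgaussTransform (μ.restrict Ω) s (a + d) * lgaussTransform (μ.restrict Ω) s (a - d)
    _ = ∫⁻ z, H z ∂(μ.prod μ) := by
      rw [lintegral_indicator (hΩ.prod hΩ), ← Measure.prod_restrict]
      refine (lintegral_prod_mul (f := fun y => ENNReal.ofReal (gaussKernel s (a + d - y)))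
        (g := fun y => ENNReal.ofReal (gaussKernel s (a - d - y))) ?_ ?_).symm <;> fun_prop
    _ = ENNReal.ofReal (2 ^ finrank ℝ E) * ∫⁻ p, ∫⁻ q, H (p + q, p - q) ∂μ ∂μ :=
      lintegral_prod_eq_lintegral_add_sub μ hH
    _ = _ := by
      simp_rw [hHpq, lintegral_indicator (measurableSet_symmSection hΩ _)]
      congr! 3 with p
      exact lintegral_const_mul _ (by fun_prop)

theorem lgaussTransform_le_of_two_mul {B : ℝ≥0} {d : E}
    (hB : ∀ L : Set E, AbsConvex ℝ L → MeasurableSet L →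
      lgaussTransform (μ.restrict L) (2 * s) d ≤
        B ^ 2 * lgaussTransform (μ.restrict L) (2 * s) 0)
    (hK : AbsConvex ℝ K) (hKm : MeasurableSet K) :
    lgaussTransform (μ.restrict K) s d ≤ B * lgaussTransform (μ.restrict K) s 0 := by
  refine (ENNReal.pow_le_pow_left_iff two_ne_zero).1 ?_
  have hprod := lgaussTransform_add_mul_lgaussTransform_sub (μ := μ) (s := s) hKm 0
  simp only [zero_add, zero_sub, lgaussTransform_restrict_neg hK.1] at hprod
  calc lgaussTransform (μ.restrict K) s d ^ 2
    _ = ENNReal.ofReal (2 ^ finrank ℝ E) *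
          ∫⁻ p, ENNReal.ofReal (gaussKernel (2 * s) (-p)) *
            lgaussTransform (μ.restrict (symmSection K p)) (2 * s) d ∂μ := by
      rw [sq, hprod]
    _ ≤ ENNReal.ofReal (2 ^ finrank ℝ E) *
          ∫⁻ p, ENNReal.ofReal (gaussKernel (2 * s) (-p)) *
            (B ^ 2 * lgaussTransform (μ.restrict (symmSection K p)) (2 * s) 0) ∂μ := by
      gcongr with p
      exact hB _ (absConvex_symmSection hK.2 p) (measurableSet_symmSection hKm p)
    _ = (B * lgaussTransform (μ.restrict K) s 0) ^ 2 := by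
      simp_rw [mul_left_comm _ ((B : ℝ≥0∞) ^ 2)]
      rw [lintegral_const_mul' _ _ (by finiteness), mul_left_comm, ← hprod 0, ← sq, mul_pow]

theorem lgaussTransform_le_of_two_pow {B : ℝ≥0} {d : E} (k : ℕ)
    (hB : ∀ L : Set E, AbsConvex ℝ L → MeasurableSet L →
      lgaussTransform (μ.restrict L) (2 ^ k * s) d ≤
        B ^ 2 ^ k * lgaussTransform (μ.restrict L) (2 ^ k * s) 0)
    (hK : AbsConvex ℝ K) (hKm : MeasurableSet K) :
    lgaussTransform (μ.restrict K) s d ≤ B * lgaussTransform (μ.restrict K) s 0 := by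
  induction k generalizing s B K with
  | zero => simpa using hB K hK hKm
  | succ k ih =>
    refine ih (fun L hL hLm => ?_) hK hKm
    refine mod_cast lgaussTransform_le_of_two_mul (B := B ^ 2 ^ k) ?_ hL hLm
    intro L hL hLm
    have := hB L hL hLm
    push_cast
    rwa [← mul_assoc, ← pow_succ', ← pow_mul, ← pow_succ]

theorem lgaussTransform_le_lgaussTransform_zero (hK : AbsConvex ℝ K) (hKm : MeasurableSet K)
    (hs : 0 ≤ s) (d : E) :
    lgaussTransform (μ.restrict K) s d ≤ lgaussTransform (μ.restrict K) s 0 := by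
  have hle {B : ℝ≥0} (hB : 1 < B) :
      lgaussTransform (μ.restrict K) s d ≤ B * lgaussTransform (μ.restrict K) s 0 := by
    obtain ⟨k, hk⟩ := exists_one_add_two_pow_pow_mul_le_pow (B := B) (mod_cast hB)
      (finrank ℝ E) (Real.exp (s * ‖d‖ ^ 2))
    refine lgaussTransform_le_of_two_pow k (fun L hL _ => ?_) hK hKm
    rcases L.eq_empty_or_nonempty with rfl | hne
    · simp [lgaussTransform]
    refine (lgaussTransform_le_of_starConvex (hL.2.starConvex (hL.1.zero_mem hne))
      (by positivity) (by positivity : (0 : ℝ) < 2 ^ k) d).trans ?_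
    have hexp : 2 ^ k * s * (‖d‖ ^ 2 / 2 ^ k) = s * ‖d‖ ^ 2 := by field_simp
    gcongr
    rw [hexp]
    exact ENNReal.ofReal_le_of_le_toReal (by simpa using hk)
  have hlim : Tendsto (fun B : ℝ≥0 => (B : ℝ≥0∞) * lgaussTransform (μ.restrict K) s 0) (𝓝[>] 1)
      (𝓝 (1 * lgaussTransform (μ.restrict K) s 0)) := by
    refine ENNReal.Tendsto.mul_const ?_ (.inl one_ne_zero)
    exact (ENNReal.tendsto_coe.2 tendsto_id).mono_left nhdsWithin_le_nhds
  rw [← one_mul (lgaussTransform _ _ 0)]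
  exact ge_of_tendsto hlim (eventually_mem_nhdsWithin.mono fun _ => hle)

theorem lgaussTransform_mul_le_sq (hΩ : Convex ℝ Ω) (hs : 0 ≤ s) (a d : E) :
    lgaussTransform (μ.restrict Ω) s (a + d) * lgaussTransform (μ.restrict Ω) s (a - d) ≤
      lgaussTransform (μ.restrict Ω) s a ^ 2 := by
  rw [← Measure.restrict_congr_set (closure_ae_eq_of_null_frontier (hΩ.addHaar_frontier μ))]
  have hprod := lgaussTransform_add_mul_lgaussTransform_sub (μ := μ) (s := s)
    (isClosed_closure (s := Ω)).measurableSet a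
  have hzero := hprod 0
  rw [add_zero, sub_zero, ← sq] at hzero
  rw [hprod, hzero]
  gcongr with p
  exact lgaussTransform_le_lgaussTransform_zero (absConvex_symmSection hΩ.closure p)
    (measurableSet_symmSection isClosed_closure.measurableSet p) (by positivity) d

end Anderson

section GaussTransform

variable {E : Type*} [NormedAddCommGroup E]

theorem tendsto_add_smul_cobounded [NormedSpace ℝ E] (c : E) {v : E} (hv : v ≠ 0) :
    Tendsto (fun r : ℝ => c + r • v) atTop (Bornology.cobounded E) := by
  refine (tendsto_const_add_cobounded c).comp (tendsto_norm_atTop_iff_cobounded.1 ?_)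
  simp_rw [norm_smul]
  exact tendsto_norm_atTop_atTop.atTop_mul_const (norm_pos_iff.2 hv)

variable [MeasurableSpace E]

/-- The real-valued transform `x ↦ ∫ exp (-s ‖x - y‖²) dμ(y)` of a measure `μ`, the object of
differential calculus. For `μ` Lebesgue measure on `Ω` and `s = 1 / (4 t)` it is a positive
multiple of `W_Ω(·, t)`. -/
def gaussTransform (μ : Measure E) (s : ℝ) (x : E) : ℝ :=
  ∫ y, gaussKernel s (x - y) ∂μ

variable [OpensMeasurableSpace E] (ν : Measure E) [IsFiniteMeasure ν] {s : ℝ}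

theorem integrable_gaussKernel_sub (hs : 0 ≤ s) (x : E) :
    Integrable (fun y => gaussKernel s (x - y)) ν :=
  .of_bound (Continuous.aestronglyMeasurable (by fun_prop)) 1
    (.of_forall fun _ => norm_gaussKernel_le_one hs _)

theorem ofReal_gaussTransform (hs : 0 ≤ s) (x : E) :
    ENNReal.ofReal (gaussTransform ν s x) = lgaussTransform ν s x :=
  ofReal_integral_eq_lintegral_ofReal (integrable_gaussKernel_sub ν hs x)
    (.of_forall fun _ => (gaussKernel_pos s _).le)

theorem gaussTransform_pos [NeZero ν] (hs : 0 ≤ s) (x : E) : 0 < gaussTransform ν s x :=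
  integral_exp_pos (integrable_gaussKernel_sub ν hs x)

theorem tendsto_gaussTransform_cobounded (hs : 0 < s) :
    Tendsto (gaussTransform ν s) (Bornology.cobounded E) (𝓝 0) := by
  have : (Bornology.cobounded E).IsCountablyGenerated := by
    rw [← comap_norm_atTop]
    infer_instance
  simpa only [integral_zero] using! tendsto_integral_filter_of_dominated_convergence (μ := ν)
    (fun _ => 1)
    (.of_forall fun x => (integrable_gaussKernel_sub ν hs.le x).aestronglyMeasurable)
    (.of_forall fun _ => .of_forall fun _ => norm_gaussKernel_le_one hs.le _)
    (integrable_const _) (.of_forall fun y =>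
      (tendsto_gaussKernel_cobounded hs).comp (tendsto_sub_const_cobounded y))

variable [InnerProductSpace ℝ E]

theorem differentiable_gaussTransform [SecondCountableTopology E] (hs : 0 ≤ s) :
    Differentiable ℝ (gaussTransform ν s) := by
  intro x₀
  have := hasFDerivAt_integral_of_dominated_of_fderiv_le (𝕜 := ℝ) (μ := ν) (x₀ := x₀)
    (F := fun x y => gaussKernel s (x - y))
    (F' := fun x y => (gaussKernel s (x - y) * (-s * 2)) • innerSL ℝ (x - y))
    (bound := fun _ => 1 + s) univ_mem
    (.of_forall fun x => (integrable_gaussKernel_sub ν hs x).aestronglyMeasurable)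
    (integrable_gaussKernel_sub ν hs x₀)
    (Continuous.aestronglyMeasurable (by fun_prop))
    (.of_forall fun y x _ => norm_fderiv_gaussKernel_le hs (x - y)) (integrable_const _)
    (.of_forall fun y x _ => (hasFDerivAt_comp_sub y).2 (hasFDerivAt_gaussKernel s (x - y)))
  exact this.differentiableAt

theorem analyticOnNhd_gaussTransform_add_smul (hs : 0 ≤ s) (c v : E) :
    AnalyticOnNhd ℝ (fun r : ℝ => gaussTransform ν s (c + r • v)) univ := by
  let dens (y : E) : ℝ≥0 := Real.toNNReal (gaussKernel s (c - y))
  let ρ : Measure E := ν.withDensity fun y => dens y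
  let X (y : E) : ℝ := -2 * s * inner ℝ (c - y) v
  have hdens : Measurable dens := Continuous.measurable (by fun_prop)
  have hdens_smul (y : E) (a : ℝ) : dens y • a = gaussKernel s (c - y) * a := by
    rw [NNReal.smul_def, Real.coe_toNNReal _ (gaussKernel_pos s _).le, smul_eq_mul]
  have hker (r : ℝ) (y : E) : gaussKernel s (c + r • v - y) =
      Real.exp (-s * (r ^ 2 * ‖v‖ ^ 2)) * (dens y • Real.exp (r * X y)) := by
    rw [add_sub_right_comm, gaussKernel_add_smul, hdens_smul]
  have hset : ProbabilityTheory.integrableExpSet X ρ = univ := by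
    refine eq_univ_of_forall fun r => (integrable_withDensity_iff_integrable_smul hdens).2 ?_
    have := integrable_gaussKernel_sub ν hs (c + r • v)
    simp_rw [hker] at this
    exact (integrable_const_mul_iff (isUnit_iff_ne_zero.2 (Real.exp_ne_zero _)) _).1 this
  have hmgf : AnalyticOnNhd ℝ (ProbabilityTheory.mgf X ρ) univ := by
    simpa only [hset, interior_univ] using ProbabilityTheory.analyticOnNhd_mgf (X := X) (μ := ρ)
  have hexp : AnalyticOnNhd ℝ (fun r : ℝ => Real.exp (-s * (r ^ 2 * ‖v‖ ^ 2))) univ :=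
    fun r _ => by fun_prop
  refine (hexp.mul hmgf).congr isOpen_univ fun r _ => ?_
  simp only [ProbabilityTheory.mgf, gaussTransform, hker, integral_const_mul]
  rw [integral_withDensity_eq_integral_smul hdens]

theorem exists_mem_segment_gaussTransform_ne [NeZero ν] (hs : 0 < s)
    {x y : E} (hxy : x ≠ y) :
    ∃ z ∈ segment ℝ x y, gaussTransform ν s z ≠ gaussTransform ν s x := by
  by_contra! hconst
  have heq : (fun r : ℝ => gaussTransform ν s (x + r • (y - x))) =
      fun _ => gaussTransform ν s x := by
    refine (analyticOnNhd_gaussTransform_add_smul ν hs.le x (y - x)).eq_of_eventuallyEq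
      (z₀ := 1 / 2) analyticOnNhd_const ?_
    filter_upwards [Icc_mem_nhds (by norm_num : (0 : ℝ) < 1 / 2) (by norm_num : (1 / 2 : ℝ) < 1)]
      with r hr
    exact hconst _ (segment_eq_image' ℝ x y ▸ mem_image_of_mem _ hr)
  have hlim : Tendsto (fun _ : ℝ => gaussTransform ν s x) atTop (𝓝 0) := by
    rw [← heq]
    exact (tendsto_gaussTransform_cobounded ν hs).comp
      (tendsto_add_smul_cobounded x (sub_ne_zero.2 hxy.symm))
  exact (gaussTransform_pos ν hs.le x).ne' (tendsto_nhds_unique tendsto_const_nhds hlim)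

variable {ν}

theorem gaussTransform_lt_of_hasFDerivAt_zero [NeZero ν] (hs : 0 < s)
    (hlog : ConcaveOn ℝ univ fun x => Real.log (gaussTransform ν s x)) {c x : E}
    (hc : HasFDerivAt (gaussTransform ν s) (0 : E →L[ℝ] ℝ) c) (hxc : x ≠ c) :
    gaussTransform ν s x < gaussTransform ν s c := by
  have hpos (y : E) := gaussTransform_pos ν hs.le y
  have hmax (y : E) : gaussTransform ν s y ≤ gaussTransform ν s c :=
    (Real.log_le_log_iff (hpos y) (hpos c)).1 <|
      le_of_concaveOn_of_hasFDerivAt_zero hlog (mem_univ c) (mem_univ y)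
        (by simpa using hc.log (hpos c).ne')
  refine (hmax x).lt_of_ne fun hx => ?_
  obtain ⟨z, hz, hzc⟩ := exists_mem_segment_gaussTransform_ne ν hs hxc.symm
  refine hzc ((hmax z).antisymm ((Real.log_le_log_iff (hpos c) (hpos z)).1 ?_))
  exact ((hlog.convex_ge (Real.log (gaussTransform ν s c))).segment_subset
    ⟨mem_univ c, le_rfl⟩ ⟨mem_univ x, by rw [hx]⟩ hz).2

theorem exists_hasFDerivAt_gaussTransform_zero [FiniteDimensional ℝ E] [NeZero ν] (hs : 0 < s) :
    ∃ c, HasFDerivAt (gaussTransform ν s) (0 : E →L[ℝ] ℝ) c := by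
  have : ProperSpace E := FiniteDimensional.proper_real E
  have hdiff := differentiable_gaussTransform ν hs.le
  obtain ⟨c, hc⟩ : ∃ c, ∀ x, gaussTransform ν s x ≤ gaussTransform ν s c := by
    refine hdiff.continuous.exists_forall_ge' 0 ?_
    rw [← cobounded_eq_cocompact]
    exact (tendsto_gaussTransform_cobounded ν hs).eventually_le_const (gaussTransform_pos ν hs.le 0)
  have hmax : IsLocalMax (gaussTransform ν s) c := .of_forall hc
  exact ⟨c, hmax.fderiv_eq_zero ▸ (hdiff c).hasFDerivAt⟩

end GaussTransform

section LogConcavity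

variable {E : Type*} [NormedAddCommGroup E] [InnerProductSpace ℝ E] [FiniteDimensional ℝ E]
  [MeasurableSpace E] [BorelSpace E] {μ : Measure E} [μ.IsAddHaarMeasure] {s : ℝ} {Ω : Set E}
  [IsFiniteMeasure (μ.restrict Ω)]

theorem gaussTransform_mul_le_midpoint_sq (hΩ : Convex ℝ Ω) (hs : 0 ≤ s) (x y : E) :
    gaussTransform (μ.restrict Ω) s x * gaussTransform (μ.restrict Ω) s y ≤
      gaussTransform (μ.restrict Ω) s (midpoint ℝ x y) ^ 2 := by
  have hnonneg (z : E) : 0 ≤ gaussTransform (μ.restrict Ω) s z :=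
    integral_nonneg fun _ => (gaussKernel_pos s _).le
  have hx : midpoint ℝ x y + (x - midpoint ℝ x y) = x := add_sub_cancel _ _
  have hy : midpoint ℝ x y - (x - midpoint ℝ x y) = y := by
    rw [midpoint_eq_smul_add, invOf_eq_inv]
    module
  have h := lgaussTransform_mul_le_sq (μ := μ) hΩ hs (midpoint ℝ x y) (x - midpoint ℝ x y)
  rwa [hx, hy, ← ofReal_gaussTransform _ hs, ← ofReal_gaussTransform _ hs,
    ← ofReal_gaussTransform _ hs, ← ENNReal.ofReal_mul (hnonneg _),
    ← ENNReal.ofReal_pow (hnonneg _), ENNReal.ofReal_le_ofReal_iff (sq_nonneg _)] at h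

theorem concaveOn_log_gaussTransform [NeZero (μ.restrict Ω)] (hΩ : Convex ℝ Ω) (hs : 0 ≤ s) :
    ConcaveOn ℝ univ fun x => Real.log (gaussTransform (μ.restrict Ω) s x) := by
  have hpos (x : E) := gaussTransform_pos (μ.restrict Ω) hs x
  refine concaveOn_univ_of_le_midpoint
    ((differentiable_gaussTransform _ hs).continuous.log fun x => (hpos x).ne') fun x y => ?_
  have hlog := Real.log_le_log (mul_pos (hpos x) (hpos y))
    (gaussTransform_mul_le_midpoint_sq hΩ hs x y)
  rw [Real.log_mul (hpos x).ne' (hpos y).ne', Real.log_pow] at hlog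
  rw [midpoint_eq_smul_add, invOf_eq_inv, smul_eq_mul, inv_mul_le_iff₀ two_pos]
  exact_mod_cast hlog

end LogConcavity

theorem hasFDerivAt_const_mul_zero_iff {E : Type*} [NormedAddCommGroup E] [NormedSpace ℝ E]
    {f : E → ℝ} {C : ℝ} (hC : C ≠ 0) {x : E} :
    HasFDerivAt (fun y => C * f y) (0 : E →L[ℝ] ℝ) x ↔ HasFDerivAt f (0 : E →L[ℝ] ℝ) x := by
  refine ⟨fun h => ?_, fun h => by simpa using h.const_mul C⟩
  simpa [inv_mul_cancel_left₀ hC] using h.const_mul C⁻¹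

theorem stmt14_general {E : Type*} [NormedAddCommGroup E] [InnerProductSpace ℝ E]
    [FiniteDimensional ℝ E] [MeasurableSpace E] [BorelSpace E] (μ : Measure E)
    [μ.IsAddHaarMeasure] {Ω : Set E} (hΩ : Convex ℝ Ω) (hpos : μ Ω ≠ 0) (hfin : μ Ω ≠ ∞) {t : ℝ}
    (ht : 0 < t) :
    let W : E → ℝ := fun x =>
      ∫ y in Ω, (4 * Real.pi * t) ^ (-(finrank ℝ E : ℝ) / 2) *
        Real.exp (-‖x - y‖ ^ 2 / (4 * t)) ∂μ
    ∃ c, HasFDerivAt W (0 : E →L[ℝ] ℝ) c ∧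
      (∀ x, HasFDerivAt W (0 : E →L[ℝ] ℝ) x → x = c) ∧ ∀ x, x ≠ c → W x < W c := by
  intro W
  have : NeZero (μ.restrict Ω) := ⟨by rwa [Ne, Measure.restrict_eq_zero]⟩
  have : IsFiniteMeasure (μ.restrict Ω) := isFiniteMeasure_restrict.2 hfin
  let s : ℝ := 1 / (4 * t)
  let C : ℝ := (4 * Real.pi * t) ^ (-(finrank ℝ E : ℝ) / 2)
  have hs : 0 < s := by positivity
  have hC : 0 < C := by positivity
  have hs_eq (z : E) : -‖z‖ ^ 2 / (4 * t) = -s * ‖z‖ ^ 2 := by ring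
  have hW : W = fun x => C * gaussTransform (μ.restrict Ω) s x := by
    ext x
    simp only [W, hs_eq, integral_const_mul]
    rfl
  have hlt {c x : E} := gaussTransform_lt_of_hasFDerivAt_zero (c := c) (x := x) hs
    (concaveOn_log_gaussTransform (μ := μ) hΩ hs.le)
  obtain ⟨c, hc⟩ := exists_hasFDerivAt_gaussTransform_zero (ν := μ.restrict Ω) hs
  simp only [hW, hasFDerivAt_const_mul_zero_iff hC.ne', mul_lt_mul_iff_right₀ hC]
  exact ⟨c, hc, fun x hx => by_contra fun hxc => (hlt hc hxc).asymm (hlt hx (Ne.symm hxc)),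
    fun x => hlt hc⟩

theorem stmt14 {m : ℕ} (Ω : Set (EuclideanSpace ℝ (Fin m)))
    (hconv : Convex ℝ Ω) (hcomp : IsCompact Ω) (hint : (interior Ω).Nonempty)
    (t : ℝ) (ht : 0 < t) :
    ∃ c : EuclideanSpace ℝ (Fin m),
      HasFDerivAt (fun x : EuclideanSpace ℝ (Fin m) => ∫ y in Ω, heatKernel m (x - y) t)
        (0 : EuclideanSpace ℝ (Fin m) →L[ℝ] ℝ) c ∧
      (∀ x : EuclideanSpace ℝ (Fin m),
        HasFDerivAt (fun x : EuclideanSpace ℝ (Fin m) => ∫ y in Ω, heatKernel m (x - y) t)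
          (0 : EuclideanSpace ℝ (Fin m) →L[ℝ] ℝ) x → x = c) ∧
      (∀ x : EuclideanSpace ℝ (Fin m), x ≠ c →
        (∫ y in Ω, heatKernel m (x - y) t) < ∫ y in Ω, heatKernel m (c - y) t) := by
  simpa only [heatKernel, finrank_euclideanSpace_fin] using stmt14_general volume hconv
    (Measure.measure_pos_of_nonempty_interior _ hint).ne' hcomp.measure_ne_top ht
end
end
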